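/- arXiv:0801.0233 — 2 statements merged into one kernel-verified Lean document; each statement's English description precedes it below -/
import Mathlib

section
/- Let r ≥ 1 and let λ̄ = (λ^{(1)},…,λ^{(r)}) be a sequence of partitions in P_n. Then a_ρ(x)·s_λ̄(x|y) = Σ c_T(y) · a_{ρ+ω(T)}(x), where the sum is over all barred skew tableaux T ∈ B_λ̄ whose unbarred column word is Yamanouchi. -/
open Finset MvPolynomial

attribute [local instance] Classical.propDecidable

/-- A partition in `P_n`: a weakly decreasing sequence of naturals. -/
def IsPartition {n : ℕ} (lam : Fin n → ℕ) : Prop := Antitone lam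

/-- The cells of the Young diagram of `lam`, as pairs (row, column), 0-based. -/
noncomputable def cells {n : ℕ} (lam : Fin n → ℕ) : Finset (Fin n × ℕ) :=
  (Finset.univ ×ˢ Finset.range (Finset.univ.sup lam)).filter fun c => c.2 < lam c.1

/-- Semistandardness for a filling with values in `Fin n` (0-based values):
rows weakly increase, columns strictly increase. -/
def IsSSYT {n : ℕ} (lam : Fin n → ℕ) (T : cells lam → Fin n) : Prop :=
  (∀ c d : cells lam, (c : Fin n × ℕ).1 = (d : Fin n × ℕ).1 →
      (c : Fin n × ℕ).2 ≤ (d : Fin n × ℕ).2 → T c ≤ T d) ∧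
  (∀ c d : cells lam, (c : Fin n × ℕ).2 = (d : Fin n × ℕ).2 →
      (c : Fin n × ℕ).1 < (d : Fin n × ℕ).1 → T c < T d)

/-- The y-subscript `a + c(a) - r(a)` of a cell (1-based value and coordinates). -/
def ysub {n : ℕ} (a : Fin n) (c : Fin n × ℕ) : ℤ := (a : ℤ) + 1 + (c.2 : ℤ) - ((c.1 : ℕ) : ℤ)

/-- The Schur polynomial `s_lam(x)`, in the ring with `x`-variables `Sum.inl i`
and `y`-variables `Sum.inr (i, k)` (family `i`, subscript `k`). -/
noncomputable def schur (n r : ℕ) (lam : Fin n → ℕ) :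
    MvPolynomial (Fin n ⊕ Fin r × ℤ) ℤ :=
  ∑ T ∈ Finset.univ.filter (IsSSYT lam), ∏ c : cells lam, X (Sum.inl (T c))

/-- The factorial Schur polynomial `s_lam(x | y^{(i)})`. -/
noncomputable def factSchur (n r : ℕ) (i : Fin r) (lam : Fin n → ℕ) :
    MvPolynomial (Fin n ⊕ Fin r × ℤ) ℤ :=
  ∑ T ∈ Finset.univ.filter (IsSSYT lam),
    ∏ c : cells lam,
      (X (Sum.inl (T c)) + X (Sum.inr (i, ysub (T c) (c : Fin n × ℕ))))

/-- A barred filling of a single Young diagram: an entry is a value in `Fin n`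
(0-based) together with a `Bool` recording whether it is barred.  Rows weakly
increase and columns strictly increase in value, disregarding bars. -/
def IsBarred {n : ℕ} (lam : Fin n → ℕ) (T : cells lam → Fin n × Bool) : Prop :=
  (∀ c d : cells lam, (c : Fin n × ℕ).1 = (d : Fin n × ℕ).1 →
      (c : Fin n × ℕ).2 ≤ (d : Fin n × ℕ).2 → (T c).1 ≤ (T d).1) ∧
  (∀ c d : cells lam, (c : Fin n × ℕ).2 = (d : Fin n × ℕ).2 →
      (c : Fin n × ℕ).1 < (d : Fin n × ℕ).1 → (T c).1 < (T d).1)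

/-- A barred skew tableau of shape `λ̄ = (lam 0, …, lam (r-1))`: since consecutive
diagrams are placed strictly below and to the left of the preceding one, no two
diagrams share a row or a column, so such a tableau is exactly a tuple of barred
fillings of the individual diagrams. -/
def IsBarredSkew {n r : ℕ} (lam : Fin r → Fin n → ℕ)
    (T : (i : Fin r) → cells (lam i) → Fin n × Bool) : Prop :=
  ∀ i, IsBarred (lam i) (T i)

/-- Unbarred content of a barred filling of one diagram. -/
noncomputable def content1 {n : ℕ} (lam : Fin n → ℕ) (T : cells lam → Fin n × Bool)
    (k : Fin n) : ℕ :=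
  (Finset.univ.filter fun c : cells lam => T c = (k, false)).card

/-- Unbarred content `ω(T)` of a barred skew tableau. -/
noncomputable def contentT {n r : ℕ} (lam : Fin r → Fin n → ℕ)
    (T : (i : Fin r) → cells (lam i) → Fin n × Bool) (k : Fin n) : ℕ :=
  ∑ i, content1 (lam i) (T i) k

/-- The monomial `c_T(y)` contributed by the barred entries of one diagram
(living in the ring of `y`-variables only). -/
noncomputable def cT1 {n : ℕ} (r : ℕ) (i : Fin r) (lam : Fin n → ℕ)
    (T : cells lam → Fin n × Bool) : MvPolynomial (Fin r × ℤ) ℤ :=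
  ∏ c ∈ Finset.univ.filter (fun c : cells lam => (T c).2 = true),
    X (i, ysub (T c).1 (c : Fin n × ℕ))

/-- The monomial `c_T(y)` of a barred skew tableau. -/
noncomputable def cT {n r : ℕ} (lam : Fin r → Fin n → ℕ)
    (T : (i : Fin r) → cells (lam i) → Fin n × Bool) : MvPolynomial (Fin r × ℤ) ℤ :=
  ∏ i, cT1 r i (lam i) (T i)

/-- The unbarred column word of a barred filling of one diagram: unbarred values
(0-based) read down each column, from the rightmost column to the leftmost. -/
noncomputable def colWord1 {n : ℕ} (lam : Fin n → ℕ)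
    (T : cells lam → Fin n × Bool) : List ℕ :=
  ((List.range (Finset.univ.sup lam)).reverse).flatMap fun j =>
    (List.finRange n).filterMap fun i =>
      if h : (i, j) ∈ cells lam then
        (if (T ⟨(i, j), h⟩).2 = false then some ((T ⟨(i, j), h⟩).1 : ℕ) else none)
      else none

/-- The unbarred column word of a barred skew tableau: diagram `lam 0` is the
rightmost, so its word comes first. -/
noncomputable def colWord {n r : ℕ} (lam : Fin r → Fin n → ℕ)
    (T : (i : Fin r) → cells (lam i) → Fin n × Bool) : List ℕ :=
  (List.finRange r).flatMap fun i => colWord1 (lam i) (T i)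

/-- A word (with 0-based values) is Yamanouchi if every initial segment contains
at least as many `k`'s as `(k+1)`'s, for every `k`. -/
def IsYam (w : List ℕ) : Prop :=
  ∀ t k, ((w.take t).count (k + 1)) ≤ (w.take t).count k

/-- The alternant `a_ξ(x) = det[(x_i)^{ξ_j}]`. -/
noncomputable def avand (n r : ℕ) (xi : Fin n → ℕ) :
    MvPolynomial (Fin n ⊕ Fin r × ℤ) ℤ :=
  Matrix.det (Matrix.of fun i j : Fin n =>
    (X (Sum.inl i) : MvPolynomial (Fin n ⊕ Fin r × ℤ) ℤ) ^ xi j)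

/-- `ρ = (n-1, n-2, …, 0)`. -/
def rhoPart (n : ℕ) : Fin n → ℕ := fun i => n - 1 - (i : ℕ)

/-!
Writing `a_ρ(x)` as the signed sum of the permuted monomials `x^ρ`, the symmetry of the factorial
Schur polynomials moves their product under the signed sum, and expanding each factor `x + y` by the
choice of a bar gives the sum of `c_T(y) a_{ρ+ω(T)}(x)` over all barred tableaux `T`. The
tableaux whose word is not Yamanouchi cancel. At the end of the first column at which the condition
fails, say for the letters `k` and `k + 1`, there is exactly one `k + 1` too many, so the exponents
of `x_k` and `x_{k+1}` contributed by `ρ` and by the columns read so far agree. The tableaux which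
differ only by bars and by exchanges of `k` and `k + 1` in the columns read later have the same
first failure, and the sum of the weights of these later columns is symmetric in `x_k` and
`x_{k+1}`; hence the signed sum over such a class of tableaux vanishes.

The symmetry of these sums, which also yields the symmetry of the factorial Schur polynomials, is
seen row by row. An exchange moves, in each row, the boundary between the letters `k` and `k + 1`
independently inside the interval allowed by the neighbouring rows, and summing over its position
telescopes after multiplication by a difference of two factors.
-/

theorem eq_range_card_of_isLowerSet {s : Finset ℕ} (hs : IsLowerSet (s : Set ℕ)) :
    s = range #s := by
  refine eq_of_subset_of_card_le (fun j hj => mem_range.mpr ?_) (card_range _).le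
  have hsub : range (j + 1) ⊆ s := fun l hl => hs (Nat.lt_succ_iff.mp (mem_range.mp hl)) hj
  simpa using card_le_card hsub

section RowSums

variable {R : Type*} [CommRing R]

/-- The factorial Schur polynomial of a single row occupying the columns `L, …, U - 1`, in the two
variables `u` and `v`: the index `m` is the column where the entries change from the letter of
weight `u` to the next letter, of weight `v`, whose `y`-subscripts are shifted by one. -/
def splitSum (u v : R) (Y : ℕ → R) (L U : ℕ) : R :=
  ∑ m ∈ Icc L U, (∏ j ∈ Ico L m, (u + Y j)) * ∏ j ∈ Ico m U, (v + Y (j + 1))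

theorem splitSum_succ (u v : R) (Y : ℕ → R) {L U : ℕ} (h : L ≤ U) :
    splitSum u v Y L (U + 1)
      = splitSum u v Y L U * (v + Y (U + 1)) + ∏ j ∈ Ico L (U + 1), (u + Y j) := by
  have hle : L ≤ U + 1 := h.trans U.le_succ
  rw [splitSum, ← insert_Icc_right_eq_Icc_add_one hle, sum_insert (by simp), splitSum, sum_mul,
    add_comm]
  congr 1
  · refine sum_congr rfl fun m hm => ?_
    rw [prod_Ico_succ_top (mem_Icc.mp hm).2, mul_assoc]
  · simp

theorem sub_mul_splitSum (u v : R) (Y : ℕ → R) {L U : ℕ} (h : L ≤ U) :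
    (u - v) * splitSum u v Y L U
      = (∏ j ∈ Ico L (U + 1), (u + Y j)) - ∏ j ∈ Ico L (U + 1), (v + Y j) := by
  induction U, h using Nat.le_induction with
  | base => simp [splitSum]
  | succ U hU ih =>
    rw [splitSum_succ u v Y hU, prod_Ico_succ_top (by lia : L ≤ U + 1),
      prod_Ico_succ_top (by lia : L ≤ U + 1)]
    linear_combination (v + Y (U + 1)) * ih

theorem splitSum_comm (u v : R) (Y : ℕ → R) (L U : ℕ) :
    splitSum u v Y L U = splitSum v u Y L U := by
  rcases lt_or_ge U L with h | h
  · simp [splitSum, Icc_eq_empty_of_lt h]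
  induction U, h using Nat.le_induction with
  | base => simp [splitSum]
  | succ U hU ih =>
    rw [splitSum_succ u v Y hU, splitSum_succ v u Y hU, ← ih]
    linear_combination -sub_mul_splitSum u v Y hU

/-- The weight of the cells of a row in the columns `A, …, B - 1` when the entries change at the
column `m` from the letter of weight `u` to the next letter, of weight `v`. -/
def rowWeight (u v : R) (Y : ℕ → R) (A B m : ℕ) : R :=
  ∏ j ∈ Ico A B, if j < m then u + Y j else v + Y (j + 1)

theorem sum_rowWeight (u v : R) (Y : ℕ → R) {A L U B : ℕ} (hA : A ≤ L) (hB : U ≤ B) :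
    ∑ m ∈ Icc L U, rowWeight u v Y A B m
      = (∏ j ∈ Ico A L, (u + Y j)) * (∏ j ∈ Ico U B, (v + Y (j + 1))) * splitSum u v Y L U := by
  rw [splitSum, mul_sum]
  refine sum_congr rfl fun m hm => ?_
  obtain ⟨hLm, hmU⟩ := mem_Icc.mp hm
  have left : ∏ j ∈ Ico A m, (if j < m then u + Y j else v + Y (j + 1))
      = ∏ j ∈ Ico A m, (u + Y j) :=
    prod_congr rfl fun j hj => if_pos (mem_Ico.mp hj).2
  have right : ∏ j ∈ Ico m B, (if j < m then u + Y j else v + Y (j + 1))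
      = ∏ j ∈ Ico m B, (v + Y (j + 1)) :=
    prod_congr rfl fun j hj => if_neg (mem_Ico.mp hj).1.not_gt
  rw [rowWeight, ← prod_Ico_consecutive _ (hA.trans hLm) (hmU.trans hB), left, right,
    ← prod_Ico_consecutive _ hA hLm, ← prod_Ico_consecutive _ hmU hB]
  ring

/-- The least `i`-th entry that a row of a Gelfand–Tsetlin pattern can have between the rows `α`
and `β`. -/
def interlacingLower (α β : ℕ → ℕ) (i : ℕ) : ℕ := max (α i) (β (i + 1))

/-- The greatest `i`-th entry that a row of a Gelfand–Tsetlin pattern can have between the rows `α`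
and `β`. -/
def interlacingUpper (α β : ℕ → ℕ) : ℕ → ℕ
  | 0 => β 0
  | i + 1 => min (β (i + 1)) (α i)

theorem le_interlacingLower (α β : ℕ → ℕ) (i : ℕ) : α i ≤ interlacingLower α β i :=
  le_max_left _ _

theorem interlacingUpper_le (α β : ℕ → ℕ) (i : ℕ) : interlacingUpper α β i ≤ β i := by
  cases i
  · exact le_rfl
  · exact min_le_left _ _

theorem prod_range_eq_prod_range_succ {M : Type*} [CommMonoid M] {n : ℕ} {f : ℕ → M}
    (h₀ : f 0 = 1) (hn : f n = 1) : ∏ i ∈ range n, f i = ∏ i ∈ range n, f (i + 1) := by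
  have h := prod_range_succ' f n
  rwa [prod_range_succ, h₀, hn, mul_one, mul_one] at h

/- The cells of row `i` below `interlacingLower` and those of row `i + 1` above `interlacingUpper`
occupy the same columns `α i, …, β (i + 1) - 1`, and contribute `u + y` and `v + y` with equal
`y`-subscripts. -/
theorem prod_sum_rowWeight (u v : R) (y : ℤ → R) {α β : ℕ → ℕ} {n : ℕ} (hβ : β n = 0) :
    ∏ i ∈ range n, ∑ m ∈ Icc (interlacingLower α β i) (interlacingUpper α β i),
        rowWeight u v (fun j => y (j - i)) (α i) (β i) m
      = (∏ i ∈ range n, ∏ j ∈ Ico (α i) (β (i + 1)), (u + y (j - i)) * (v + y (j - i))) *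
        ∏ i ∈ range n, splitSum u v (fun j => y (j - i))
          (interlacingLower α β i) (interlacingUpper α β i) := by
  have lower (i : ℕ) : Ico (α i) (interlacingLower α β i) = Ico (α i) (β (i + 1)) := by
    ext j
    simp only [interlacingLower, mem_Ico]
    lia
  have upper (i : ℕ) : Ico (interlacingUpper α β (i + 1)) (β (i + 1)) = Ico (α i) (β (i + 1)) := by
    ext j
    simp only [interlacingUpper, mem_Ico]
    lia
  have shift : ∏ i ∈ range n, ∏ j ∈ Ico (interlacingUpper α β i) (β i),
      (v + y ((j + 1 : ℕ) - i)) = ∏ i ∈ range n, ∏ j ∈ Ico (α i) (β (i + 1)), (v + y (j - i)) := by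
    rw [prod_range_eq_prod_range_succ (by simp [interlacingUpper]) (by simp [hβ])]
    simp_rw [upper, Nat.cast_succ, add_sub_add_right_eq_sub]
  simp_rw [prod_mul_distrib, ← shift]
  rw [← prod_mul_distrib, ← prod_mul_distrib]
  refine prod_congr rfl fun i _ => ?_
  rw [sum_rowWeight u v _ (le_interlacingLower α β i) (interlacingUpper_le α β i), lower i]

theorem prod_sum_rowWeight_comm (u v : R) (y : ℤ → R) {α β : ℕ → ℕ} {n : ℕ} (hβ : β n = 0) :
    ∏ i ∈ range n, ∑ m ∈ Icc (interlacingLower α β i) (interlacingUpper α β i),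
        rowWeight u v (fun j => y (j - i)) (α i) (β i) m
      = ∏ i ∈ range n, ∑ m ∈ Icc (interlacingLower α β i) (interlacingUpper α β i),
          rowWeight v u (fun j => y (j - i)) (α i) (β i) m := by
  simp only [prod_sum_rowWeight _ _ y hβ, splitSum_comm u v, mul_comm (u + _)]

end RowSums

section RowCount

variable {n : ℕ} {μ : Fin n → ℕ}

theorem mem_cells {c : Fin n × ℕ} : c ∈ cells μ ↔ c.2 < μ c.1 := by
  simp only [cells, mem_filter, mem_product, mem_univ, mem_range, true_and, and_iff_right_iff_imp]
  exact fun h => h.trans_le (le_sup (mem_univ c.1))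

theorem col_lt_sup (c : cells μ) : c.1.2 < univ.sup μ :=
  (mem_cells.mp c.2).trans_le (le_sup (mem_univ c.1.1))

theorem mem_cells_of_le (hμ : IsPartition μ) {c d : Fin n × ℕ} (hd : d ∈ cells μ)
    (hrow : c.1 ≤ d.1) (hcol : c.2 ≤ d.2) : c ∈ cells μ :=
  mem_cells.mpr <| hcol.trans_lt <| (mem_cells.mp hd).trans_le (hμ hrow)

/-- The number of entries smaller than `v` in the first `J` cells of row `i` of a filling. For a
semistandard filling these are the entries of the row `v` of its Gelfand–Tsetlin pattern. The row is
a natural number, so that rows below the diagram count zero. -/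
noncomputable def rowCount (V : cells μ → Fin n) (J v i : ℕ) : ℕ :=
  #{c : cells μ | (c.1.1 : ℕ) = i ∧ c.1.2 < J ∧ (V c : ℕ) < v}

variable {V V' : cells μ → Fin n} {J v w i j : ℕ}

theorem rowCount_eq_zero (hi : n ≤ i) : rowCount V J v i = 0 := by
  refine card_eq_zero.mpr <| filter_eq_empty_iff.mpr fun c _ h => ?_
  lia

theorem rowCount_congr (h : ∀ c : cells μ, c.1.2 < J → ((V c : ℕ) < v ↔ (V' c : ℕ) < v)) :
    rowCount V J v i = rowCount V' J v i :=
  congrArg card <| filter_congr fun c _ => and_congr_right fun _ => and_congr_right (h c)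

theorem rowCount_mono (hvw : v ≤ w) : rowCount V J v i ≤ rowCount V J w i :=
  card_le_card <| monotone_filter_right _ fun _ _ h => ⟨h.1, h.2.1, h.2.2.trans_le hvw⟩

theorem lt_rowCount_iff (hV : IsSSYT μ V) :
    j < rowCount V J v i ↔ ∃ c : cells μ, (c.1.1 : ℕ) = i ∧ c.1.2 = j ∧ j < J ∧ (V c : ℕ) < v := by
  set s : Finset (cells μ) := {c | (c.1.1 : ℕ) = i ∧ c.1.2 < J ∧ (V c : ℕ) < v} with hs
  have mem_s (c : cells μ) : c ∈ s ↔ (c.1.1 : ℕ) = i ∧ c.1.2 < J ∧ (V c : ℕ) < v := by simp [hs]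
  have lower : IsLowerSet (s.image (·.1.2) : Set ℕ) := by
    intro l j hjl hl
    obtain ⟨c, hc, rfl⟩ := mem_image.mp (mem_coe.mp hl)
    obtain ⟨hci, hcJ, hcv⟩ := (mem_s c).mp hc
    let d : cells μ := ⟨(c.1.1, j), mem_cells.mpr (hjl.trans_lt (mem_cells.mp c.2))⟩
    have hdv : (V d : ℕ) < v := (Fin.le_def.mp (hV.1 d c rfl hjl)).trans_lt hcv
    exact mem_image.mpr ⟨d, (mem_s d).mpr ⟨hci, hjl.trans_lt hcJ, hdv⟩, rfl⟩
  have card : #(s.image (·.1.2)) = rowCount V J v i :=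
    card_image_of_injOn fun c hc d hd hcd => Subtype.ext <| Prod.ext
      (Fin.ext (((mem_s c).mp hc).1.trans ((mem_s d).mp hd).1.symm)) hcd
  rw [← mem_range, ← card, ← eq_range_card_of_isLowerSet lower, mem_image]
  refine exists_congr fun c => ?_
  rw [mem_s]
  lia

theorem col_lt_rowCount_iff (hV : IsSSYT μ V) (c : cells μ) :
    c.1.2 < rowCount V J v c.1.1 ↔ c.1.2 < J ∧ (V c : ℕ) < v := by
  rw [lt_rowCount_iff hV]
  refine ⟨fun ⟨d, hrow, hcol, h⟩ => ?_, fun h => ⟨c, rfl, rfl, h⟩⟩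
  obtain rfl : d = c := Subtype.ext (Prod.ext (Fin.ext hrow) hcol)
  exact h

theorem rowCount_le (hV : IsSSYT μ V) (i : Fin n) : rowCount V J v i ≤ μ i := by
  refine le_of_forall_lt fun j hj => ?_
  obtain ⟨c, hrow, rfl, -⟩ := (lt_rowCount_iff hV).mp hj
  exact Fin.ext hrow ▸ mem_cells.mp c.2

theorem rowCount_succ_succ_le (hμ : IsPartition μ) (hV : IsSSYT μ V) :
    rowCount V J (v + 1) (i + 1) ≤ rowCount V J v i := by
  refine le_of_forall_lt fun j hj => (lt_rowCount_iff hV).mpr ?_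
  obtain ⟨d, hrow, rfl, hdJ, hdv⟩ := (lt_rowCount_iff hV).mp hj
  let c : cells μ := ⟨(⟨i, by lia⟩, d.1.2),
    mem_cells_of_le hμ d.2 (Fin.le_def.mpr (by simp [hrow])) le_rfl⟩
  have hcd : V c < V d := hV.2 c d rfl (Fin.lt_def.mpr (by simp [c, hrow]))
  exact ⟨c, rfl, rfl, hdJ, by lia⟩

theorem rowCount_antitone (hμ : IsPartition μ) (hV : IsSSYT μ V) : Antitone (rowCount V J v) :=
  antitone_nat_of_succ_le fun _ =>
    (rowCount_mono v.le_succ).trans (rowCount_succ_succ_le hμ hV)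

theorem rowCount_mem_Icc (hμ : IsPartition μ) (hV : IsSSYT μ V) :
    rowCount V J (v + 1) i ∈ Icc (interlacingLower (rowCount V J v) (rowCount V J (v + 2)) i)
      (interlacingUpper (rowCount V J v) (rowCount V J (v + 2)) i) := by
  refine mem_Icc.mpr ⟨max_le (rowCount_mono v.le_succ) (rowCount_succ_succ_le hμ hV), ?_⟩
  cases i with
  | zero => exact rowCount_mono (v + 1).le_succ
  | succ i => exact le_min (rowCount_mono (v + 1).le_succ) (rowCount_succ_succ_le hμ hV)

theorem prod_cells_eq_prod_Ico {M : Type*} [CommMonoid M] (f : Fin n → ℕ → M) {α β : Fin n → ℕ}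
    (hβ : ∀ i, β i ≤ μ i) :
    ∏ c : cells μ with α c.1.1 ≤ c.1.2 ∧ c.1.2 < β c.1.1, f c.1.1 c.1.2
      = ∏ i, ∏ j ∈ Ico (α i) (β i), f i j := by
  rw [← prod_fiberwise _ fun c : cells μ => c.1.1]
  refine prod_congr rfl fun i _ => prod_bij' (fun c _ => c.1.2)
    (fun j hj => ⟨(i, j), mem_cells.mpr ((mem_Ico.mp hj).2.trans_le (hβ i))⟩) ?_ ?_ ?_ ?_ ?_
  · simp only [mem_filter, mem_Ico]
    rintro c ⟨⟨-, hc⟩, rfl⟩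
    exact hc
  · simp
  · simp only [mem_filter]
    rintro c ⟨-, rfl⟩
    rfl
  · simp
  · simp only [mem_filter]
    rintro c ⟨-, rfl⟩
    rfl

end RowCount

section Exchange

/-- Identification of the letter `k + 1` with the letter `k`. -/
def merge (k v : ℕ) : ℕ := if v = k + 1 then k else v

theorem merge_eq_merge_iff {k u v : ℕ} :
    merge k u = merge k v ↔ u = v ∨ (u = k ∨ u = k + 1) ∧ (v = k ∨ v = k + 1) := by
  grind [merge]

theorem lt_iff_lt_of_merge_eq {k u v w : ℕ} (h : merge k u = merge k v) (hw : w ≠ k + 1) :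
    u < w ↔ v < w := by
  grind [merge]

variable {n : ℕ} {μ : Fin n → ℕ}

/-- The semistandard fillings obtained from `V₀` by exchanging letters `k` and `k + 1` in the
columns `j < J`. -/
noncomputable def exchangeClass (V₀ : cells μ → Fin n) (J k : ℕ) : Finset (cells μ → Fin n) :=
  {V | IsSSYT μ V ∧ ∀ c, if c.1.2 < J then merge k (V c) = merge k (V₀ c) else V c = V₀ c}

/-- If column `J` of the filling contains the letter `k`, it also contains `k + 1`. Then the
exchanges of `k` and `k + 1` on the left of column `J` are not restricted by the entries in column
`J`. -/
def IsExchangeBoundary (V : cells μ → Fin n) (J k : ℕ) : Prop :=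
  0 < J → ∀ c, c.1.2 = J → (V c : ℕ) = k → ∃ d, d.1.2 = J ∧ (V d : ℕ) = k + 1

variable {V V₀ : cells μ → Fin n} {J k : ℕ}

theorem rowCount_eq_of_mem_exchangeClass (hV : V ∈ exchangeClass V₀ J k) {v : ℕ} (hv : v ≠ k + 1)
    (i : ℕ) : rowCount V J v i = rowCount V₀ J v i := by
  have hmerge := (mem_filter.mp hV).2.2
  exact rowCount_congr fun c hc => lt_iff_lt_of_merge_eq ((if_pos hc).mp (hmerge c)) hv

theorem rowCount_mem_Icc_of_mem_exchangeClass (hμ : IsPartition μ)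
    (hV : V ∈ exchangeClass V₀ J k) (i : ℕ) :
    rowCount V J (k + 1) i ∈
      Icc (interlacingLower (rowCount V₀ J k) (rowCount V₀ J (k + 2)) i)
        (interlacingUpper (rowCount V₀ J k) (rowCount V₀ J (k + 2)) i) := by
  rw [← funext (rowCount_eq_of_mem_exchangeClass hV (by lia : k ≠ k + 1)),
    ← funext (rowCount_eq_of_mem_exchangeClass hV (by lia : k + 2 ≠ k + 1))]
  exact rowCount_mem_Icc hμ (mem_filter.mp hV).2.1

/-- The cell `c` lies in a column `j < J` and has the entry `k` or `k + 1`. -/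
def IsExchangeable (V : cells μ → Fin n) (J k : ℕ) (c : cells μ) : Prop :=
  c.1.2 < J ∧ ((V c : ℕ) = k ∨ (V c : ℕ) = k + 1)

theorem isExchangeable_iff (hV : IsSSYT μ V) (c : cells μ) :
    IsExchangeable V J k c ↔
      rowCount V J k c.1.1 ≤ c.1.2 ∧ c.1.2 < rowCount V J (k + 2) c.1.1 := by
  rw [col_lt_rowCount_iff hV, ← not_lt, col_lt_rowCount_iff hV, IsExchangeable]
  lia

theorem lt_rowCount_succ_of_isExchangeBoundary (hμ : IsPartition μ) (hV : IsSSYT μ V)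
    (hJ : IsExchangeBoundary V J k) {c d : cells μ} (hrow : c.1.1 = d.1.1) (hcJ : c.1.2 < J)
    (hdJ : J ≤ d.1.2) (hc : (V c : ℕ) = k) (hd : (V d : ℕ) = k) :
    c.1.2 < rowCount V J (k + 2) (c.1.1 + 1) := by
  let e : cells μ := ⟨(d.1.1, J), mem_cells_of_le hμ d.2 le_rfl hdJ⟩
  have he : (V e : ℕ) = k := by
    have hce : V c ≤ V e := hV.1 c e hrow hcJ.le
    have hed : V e ≤ V d := hV.1 e d rfl hdJ
    lia
  obtain ⟨f, hfJ, hf⟩ := hJ (by lia) e rfl he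
  have hrow_lt : c.1.1 < f.1.1 := by
    by_contra! hle
    rcases hle.eq_or_lt with heq | hlt
    · have hfe : V f = V e := congrArg V (Subtype.ext (Prod.ext (heq.trans hrow) hfJ))
      lia
    · have hfe : V f < V e := hV.2 f e hfJ (hlt.trans_eq hrow)
      lia
  let g : cells μ := ⟨(f.1.1, c.1.2), mem_cells_of_le hμ f.2 le_rfl (hfJ ▸ hcJ.le)⟩
  have hgf : V g ≤ V f := hV.1 g f rfl (hfJ ▸ hcJ.le)
  calc c.1.2 < rowCount V J (k + 2) f.1.1 :=
        (lt_rowCount_iff hV).mpr ⟨g, rfl, rfl, hcJ, by lia⟩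
    _ ≤ rowCount V J (k + 2) (c.1.1 + 1) := rowCount_antitone hμ hV hrow_lt

variable {a b : Fin n} {m : Fin n → ℕ}

/-- The filling obtained from `V₀` by placing in each row `i`, among the cells with entry `a` or `b`
in the columns `j < J`, the letter `a` in the columns `j < m i` and `b` in the others. -/
noncomputable def fillRows (V₀ : cells μ → Fin n) (J : ℕ) (a b : Fin n) (m : Fin n → ℕ)
    (c : cells μ) : Fin n :=
  if IsExchangeable V₀ J a c then if c.1.2 < m c.1.1 then a else b else V₀ c

theorem fillRows_row_le (hμ : IsPartition μ) (hV₀ : IsSSYT μ V₀) (hab : (b : ℕ) = a + 1)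
    (hJ : IsExchangeBoundary V₀ J a)
    (hm : ∀ i : Fin n, interlacingLower (rowCount V₀ J a) (rowCount V₀ J (a + 2)) i ≤ m i)
    (c d : cells μ) (hrow : c.1.1 = d.1.1) (hcol : c.1.2 ≤ d.1.2) :
    fillRows V₀ J a b m c ≤ fillRows V₀ J a b m d := by
  have hcd : V₀ c ≤ V₀ d := hV₀.1 c d hrow hcol
  have boundary (hcJ : c.1.2 < J) (hdJ : J ≤ d.1.2) (hc : V₀ c = a) (hd : V₀ d = a) :
      c.1.2 < m c.1.1 :=
    (lt_rowCount_succ_of_isExchangeBoundary hμ hV₀ hJ hrow hcJ hdJ (congrArg Fin.val hc)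
      (congrArg Fin.val hd)).trans_le ((le_max_right _ _).trans (hm _))
  grind [fillRows, IsExchangeable]

theorem fillRows_col_lt (hμ : IsPartition μ) (hV₀ : IsSSYT μ V₀) (hab : (b : ℕ) = a + 1)
    (hm : ∀ i : Fin n, m i ∈ Icc (interlacingLower (rowCount V₀ J a) (rowCount V₀ J (a + 2)) i)
      (interlacingUpper (rowCount V₀ J a) (rowCount V₀ J (a + 2)) i))
    (c d : cells μ) (hcol : c.1.2 = d.1.2) (hrow : c.1.1 < d.1.1) :
    fillRows V₀ J a b m c < fillRows V₀ J a b m d := by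
  have hcd : V₀ c < V₀ d := hV₀.2 c d hcol hrow
  have exchange (hc : IsExchangeable V₀ J a c) (hd : IsExchangeable V₀ J a d) :
      c.1.2 < m c.1.1 ∧ m d.1.1 ≤ c.1.2 := by
    obtain ⟨i, hi⟩ : ∃ i, (d.1.1 : ℕ) = i + 1 := ⟨d.1.1 - 1, by lia⟩
    have lower := (mem_Icc.mp (hm c.1.1)).1
    have upper := (mem_Icc.mp (hm d.1.1)).2
    rw [hi] at upper
    constructor
    · calc c.1.2 = d.1.2 := hcol
        _ < rowCount V₀ J (a + 2) d.1.1 := ((isExchangeable_iff hV₀ d).mp hd).2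
        _ ≤ rowCount V₀ J (a + 2) (c.1.1 + 1) := rowCount_antitone hμ hV₀ hrow
        _ ≤ m c.1.1 := (le_max_right _ _).trans lower
    · calc m d.1.1 ≤ rowCount V₀ J a i := upper.trans (min_le_right _ _)
        _ ≤ rowCount V₀ J a c.1.1 := rowCount_antitone hμ hV₀ (by lia)
        _ ≤ c.1.2 := ((isExchangeable_iff hV₀ c).mp hc).1
  grind [fillRows, IsExchangeable]

theorem fillRows_mem_exchangeClass (hμ : IsPartition μ) (hV₀ : IsSSYT μ V₀) (hab : (b : ℕ) = a + 1)
    (hJ : IsExchangeBoundary V₀ J a)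
    (hm : ∀ i : Fin n, m i ∈ Icc (interlacingLower (rowCount V₀ J a) (rowCount V₀ J (a + 2)) i)
      (interlacingUpper (rowCount V₀ J a) (rowCount V₀ J (a + 2)) i)) :
    fillRows V₀ J a b m ∈ exchangeClass V₀ J a := by
  refine mem_filter.mpr ⟨mem_univ _, ⟨fillRows_row_le hμ hV₀ hab hJ fun i => (mem_Icc.mp (hm i)).1,
    fillRows_col_lt hμ hV₀ hab hm⟩, fun c => ?_⟩
  simp only [merge_eq_merge_iff]
  grind [fillRows, IsExchangeable]

theorem fillRows_rowCount (hab : (b : ℕ) = a + 1) (hV : V ∈ exchangeClass V₀ J a) :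
    fillRows V₀ J a b (fun i => rowCount V J (a + 1) i) = V := by
  obtain ⟨-, hV, hmerge⟩ := mem_filter.mp hV
  funext c
  have hc := hmerge c
  simp only [merge_eq_merge_iff] at hc
  have hlt := col_lt_rowCount_iff (J := J) (v := a + 1) hV c
  grind [fillRows, IsExchangeable]

theorem rowCount_fillRows (hV₀ : IsSSYT μ V₀) (hab : (b : ℕ) = a + 1)
    (hF : IsSSYT μ (fillRows V₀ J a b m)) {i : Fin n}
    (hm : m i ∈ Icc (rowCount V₀ J a i) (rowCount V₀ J (a + 2) i)) :
    rowCount (fillRows V₀ J a b m) J (a + 1) i = m i := by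
  obtain ⟨hα, hβ⟩ := mem_Icc.mp hm
  refine eq_of_forall_lt_iff fun j => ⟨fun hj => ?_, fun hj => ?_⟩
  · obtain ⟨c, hci, rfl, hcJ, hc⟩ := (lt_rowCount_iff hF).mp hj
    have := col_lt_rowCount_iff (J := J) (v := a) hV₀ c
    grind [fillRows, IsExchangeable]
  · obtain ⟨c, hci, rfl, hcJ, hc⟩ := (lt_rowCount_iff hV₀).mp (hj.trans_le hβ)
    refine (lt_rowCount_iff hF).mpr ⟨c, hci, rfl, hcJ, ?_⟩
    grind [fillRows, IsExchangeable]

section Weight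

variable {R : Type*} [CommRing R] {x : Fin n → R} {y : ℤ → R}

theorem prod_fillRows (hV₀ : IsSSYT μ V₀) (hab : (b : ℕ) = a + 1) (m : Fin n → ℕ) :
    ∏ c : cells μ with c.1.2 < J,
        (x (fillRows V₀ J a b m c) + y (ysub (fillRows V₀ J a b m c) c))
      = (∏ c : cells μ with c.1.2 < J ∧ ¬ IsExchangeable V₀ J a c,
          (x (V₀ c) + y (ysub (V₀ c) c))) *
        ∏ i : Fin n, rowWeight (x a) (x b) (fun j => y (a + 1 + (j - i)))
          (rowCount V₀ J a i) (rowCount V₀ J (a + 2) i) (m i) := by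
  rw [← prod_filter_mul_prod_filter_not _ (IsExchangeable V₀ J a), filter_filter, filter_filter,
    mul_comm]
  refine congrArg₂ (· * ·) ?_ ?_
  · refine prod_congr rfl fun c hc => ?_
    rw [fillRows, if_neg (mem_filter.mp hc).2.2]
  · simp only [rowWeight]
    rw [← prod_cells_eq_prod_Ico _ fun i => rowCount_le hV₀ i]
    refine prod_congr (filter_congr fun c _ => ?_) fun c hc => ?_
    · rw [← isExchangeable_iff hV₀]
      exact and_iff_right_of_imp And.left
    · rw [fillRows, if_pos ((isExchangeable_iff hV₀ c).mpr (mem_filter.mp hc).2)]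
      split_ifs
      · rw [ysub, add_sub_assoc]
      · rw [ysub, hab]
        push_cast
        ring_nf

/-- The sum over an exchange class of the weights of the cells on the left of column `J`, as in the
definition of the factorial Schur polynomials. -/
noncomputable def classSum (V₀ : cells μ → Fin n) (J k : ℕ) (x : Fin n → R) (y : ℤ → R) : R :=
  ∑ V ∈ exchangeClass V₀ J k, ∏ c : cells μ with c.1.2 < J, (x (V c) + y (ysub (V c) c))

theorem classSum_eq (hμ : IsPartition μ) (hV₀ : IsSSYT μ V₀) (hab : (b : ℕ) = a + 1)
    (hJ : IsExchangeBoundary V₀ J a) :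
    classSum V₀ J a x y
      = (∏ c : cells μ with c.1.2 < J ∧ ¬ IsExchangeable V₀ J a c,
          (x (V₀ c) + y (ysub (V₀ c) c))) *
        ∏ i ∈ range n, ∑ m ∈ Icc (interlacingLower (rowCount V₀ J a) (rowCount V₀ J (a + 2)) i)
            (interlacingUpper (rowCount V₀ J a) (rowCount V₀ J (a + 2)) i),
          rowWeight (x a) (x b) (fun j => y (a + 1 + (j - i)))
            (rowCount V₀ J a i) (rowCount V₀ J (a + 2) i) m := by
  rw [prod_range, prod_univ_sum, mul_sum, classSum]
  refine sum_bij' (fun V _ i => rowCount V J (a + 1) i) (fun m _ => fillRows V₀ J a b m)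
    (fun V hV => Fintype.mem_piFinset.mpr fun i => rowCount_mem_Icc_of_mem_exchangeClass hμ hV i)
    (fun m hm => fillRows_mem_exchangeClass hμ hV₀ hab hJ (Fintype.mem_piFinset.mp hm))
    (fun V hV => fillRows_rowCount hab hV) (fun m hm => funext fun i => ?_) fun V hV => ?_
  · have hm := Fintype.mem_piFinset.mp hm
    refine rowCount_fillRows hV₀ hab
      (mem_filter.mp (fillRows_mem_exchangeClass hμ hV₀ hab hJ hm)).2.1 ?_
    exact Icc_subset_Icc (le_interlacingLower _ _ _) (interlacingUpper_le _ _ _) (hm i)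
  · rw [← prod_fillRows hV₀ hab, fillRows_rowCount hab hV]

theorem classSum_comp_swap (hμ : IsPartition μ) (hV₀ : IsSSYT μ V₀) (hab : (b : ℕ) = a + 1)
    (hJ : IsExchangeBoundary V₀ J a) :
    classSum V₀ J a (x ∘ Equiv.swap a b) y = classSum V₀ J a x y := by
  rw [classSum_eq hμ hV₀ hab hJ, classSum_eq hμ hV₀ hab hJ]
  refine congrArg₂ (· * ·) ?_ ?_
  · refine prod_congr rfl fun c hc => ?_
    have hne : V₀ c ≠ a ∧ V₀ c ≠ b := by grind [IsExchangeable]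
    rw [Function.comp_apply, Equiv.swap_apply_of_ne_of_ne hne.1 hne.2]
  · simp only [Function.comp_apply, Equiv.swap_apply_left, Equiv.swap_apply_right]
    exact prod_sum_rowWeight_comm _ _ (fun z => y (a + 1 + z)) (rowCount_eq_zero le_rfl)

end Weight

end Exchange

section Barred

variable {n : ℕ} {μ : Fin n → ℕ} {R : Type*} [CommRing R]

theorem sum_prod_eq_sum_prod_sum {ι A B : Type*} [Fintype ι] {S : Finset (ι → A × B)}
    {s : Finset (ι → A)} {t : ι → Finset B}
    (hS : ∀ f, f ∈ S ↔ Prod.fst ∘ f ∈ s ∧ ∀ c, (f c).2 ∈ t c) (w : ι → A × B → R) :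
    ∑ f ∈ S, ∏ c, w c (f c) = ∑ V ∈ s, ∏ c, ∑ z ∈ t c, w c (V c, z) := by
  simp_rw [prod_univ_sum]
  rw [← sum_product']
  refine sum_bij' (fun f _ => (Prod.fst ∘ f, Prod.snd ∘ f)) (fun g _ c => (g.1 c, g.2 c))
    (fun f hf => ?_) (fun g hg => ?_) (fun _ _ => rfl) (fun _ _ => rfl) (fun _ _ => rfl)
  · simpa [hS] using hf
  · simpa [hS, Function.comp_def] using hg

/-- The weight of an entry of a barred tableau: an `x`-variable if it is unbarred, and the factor
of `c_T(y)` if it is barred. -/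
def entryWeight (x : Fin n → R) (y : ℤ → R) (c : Fin n × ℕ) (e : Fin n × Bool) : R :=
  if e.2 then y (ysub e.1 c) else x e.1

theorem sum_entryWeight (x : Fin n → R) (y : ℤ → R) (c : Fin n × ℕ) (a : Fin n) :
    ∑ z : Bool, entryWeight x y c (a, z) = x a + y (ysub a c) := by
  simp [entryWeight, add_comm]

theorem sum_isBarred_prod_entryWeight (x : Fin n → R) (y : ℤ → R) :
    ∑ t with IsBarred μ t, ∏ c : cells μ, entryWeight x y c (t c)
      = ∑ V : cells μ → Fin n with IsSSYT μ V, ∏ c, (x (V c) + y (ysub (V c) c)) := by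
  simp_rw [← sum_entryWeight]
  refine sum_prod_eq_sum_prod_sum (t := fun _ => univ) (fun t => ?_)
    fun (c : cells μ) e => entryWeight x y c e
  simp only [mem_filter_univ, mem_univ, implies_true, and_true]
  rfl

/-- The barred fillings obtained from `t₀` by exchanging letters `k` and `k + 1` and changing bars
in the columns `j < J`. -/
noncomputable def barredClass (t₀ : cells μ → Fin n × Bool) (J k : ℕ) :
    Finset (cells μ → Fin n × Bool) :=
  {t | IsBarred μ t ∧
    ∀ c, if c.1.2 < J then merge k (t c).1 = merge k (t₀ c).1 else t c = t₀ c}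

theorem sum_barredClass_prod_entryWeight (t₀ : cells μ → Fin n × Bool) (J k : ℕ) (x : Fin n → R)
    (y : ℤ → R) :
    ∑ t ∈ barredClass t₀ J k, ∏ c : cells μ, entryWeight x y c (t c)
      = (∏ c : cells μ with ¬ c.1.2 < J, entryWeight x y c (t₀ c)) *
        classSum (Prod.fst ∘ t₀) J k x y := by
  have mem_class (t : cells μ → Fin n × Bool) :
      t ∈ barredClass t₀ J k ↔ Prod.fst ∘ t ∈ exchangeClass (Prod.fst ∘ t₀) J k ∧
        ∀ c : cells μ, (t c).2 ∈ if c.1.2 < J then univ else {(t₀ c).2} := by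
    simp only [barredClass, exchangeClass, mem_filter_univ, and_assoc, ← forall_and]
    refine and_congr_right fun _ => forall_congr' fun c => ?_
    split_ifs <;> simp [Prod.ext_iff]
  rw [sum_prod_eq_sum_prod_sum mem_class fun c e => entryWeight x y c e, classSum, mul_sum]
  refine sum_congr rfl fun V hV => ?_
  rw [← prod_filter_mul_prod_filter_not univ (fun c : cells μ => c.1.2 < J), mul_comm]
  refine congrArg₂ (· * ·) ?_ ?_
  · refine prod_congr rfl fun c hc => ?_
    have hc := (mem_filter.mp hc).2
    rw [if_neg hc, sum_singleton, (if_neg hc).mp ((mem_filter.mp hV).2.2 c), Function.comp_apply]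
  · refine prod_congr rfl fun c hc => ?_
    rw [if_pos (mem_filter.mp hc).2, sum_entryWeight]

end Barred

section Alternation

variable {σ τ R : Type*} [CommRing R]

/-- The action of a permutation on the `x`-variables of a polynomial in `x`- and `y`-variables. -/
noncomputable def permuteX (s : Equiv.Perm σ) :
    MvPolynomial (σ ⊕ τ) R →ₐ[R] MvPolynomial (σ ⊕ τ) R :=
  rename (Sum.map s id)

@[simp]
theorem permuteX_X_inl (s : Equiv.Perm σ) (a : σ) :
    permuteX s (X (Sum.inl a) : MvPolynomial (σ ⊕ τ) R) = X (Sum.inl (s a)) := by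
  simp [permuteX]

@[simp]
theorem permuteX_X_inr (s : Equiv.Perm σ) (t : τ) :
    permuteX s (X (Sum.inr t) : MvPolynomial (σ ⊕ τ) R) = X (Sum.inr t) := by
  simp [permuteX]

@[simp]
theorem permuteX_rename_inr (s : Equiv.Perm σ) (p : MvPolynomial τ R) :
    permuteX s (rename Sum.inr p : MvPolynomial (σ ⊕ τ) R) = rename Sum.inr p := by
  simp [permuteX, rename_rename, Function.comp_def]

theorem permuteX_mul (s t : Equiv.Perm σ) (p : MvPolynomial (σ ⊕ τ) R) :
    permuteX (s * t) p = permuteX s (permuteX t p) := by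
  simp [permuteX, rename_rename, Sum.map_comp_map]

theorem permuteX_one (p : MvPolynomial (σ ⊕ τ) R) : permuteX 1 p = p := by
  simp [permuteX]

theorem permuteX_eq_of_forall_adjacent_swap {n : ℕ} {F : MvPolynomial (Fin n ⊕ τ) R}
    (hF : ∀ a b : Fin n, (b : ℕ) = a + 1 → permuteX (Equiv.swap a b) F = F)
    (s : Equiv.Perm (Fin n)) : permuteX s F = F := by
  cases n with
  | zero => rw [Subsingleton.elim s 1, permuteX_one]
  | succ n =>
    have hs : s ∈ Submonoid.closure (Set.range fun i : Fin n => Equiv.swap i.castSucc i.succ) := by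
      rw [Equiv.Perm.mclosure_swap_castSucc_succ]
      trivial
    induction hs using Submonoid.closure_induction with
    | mem s hs =>
      obtain ⟨i, rfl⟩ := hs
      convert hF i.castSucc i.succ (by simp)
    | one => exact permuteX_one F
    | mul s t _ _ hs ht => rw [permuteX_mul, ht, hs]

variable [Fintype σ] [DecidableEq σ]

theorem permuteX_swap_prod_X_pow {a b : σ} {e : σ → ℕ} (hab : e a = e b) :
    permuteX (Equiv.swap a b) (∏ v, X (Sum.inl v) ^ e v : MvPolynomial (σ ⊕ τ) R)
      = ∏ v, X (Sum.inl v) ^ e v := by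
  simp only [map_prod, map_pow, permuteX_X_inl]
  refine Fintype.prod_equiv (Equiv.swap a b) _ _ fun v => ?_
  rw [Equiv.apply_swap_eq_self hab]

/-- The signed sum of the images of a polynomial under all permutations of the `x`-variables. -/
noncomputable def alternation : MvPolynomial (σ ⊕ τ) R →ₗ[R] MvPolynomial (σ ⊕ τ) R :=
  ∑ s : Equiv.Perm σ, Equiv.Perm.sign s • (permuteX s).toLinearMap

theorem alternation_apply (p : MvPolynomial (σ ⊕ τ) R) :
    alternation p = ∑ s : Equiv.Perm σ, Equiv.Perm.sign s • permuteX s p := by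
  simp [alternation]

theorem alternation_mul_of_forall_permuteX_eq (p : MvPolynomial (σ ⊕ τ) R)
    {F : MvPolynomial (σ ⊕ τ) R} (hF : ∀ s : Equiv.Perm σ, permuteX s F = F) :
    alternation (p * F) = alternation p * F := by
  simp only [alternation_apply, map_mul, hF, sum_mul, smul_mul_assoc]

theorem alternation_eq_zero_of_permuteX_swap_eq {a b : σ} (hab : a ≠ b)
    {p : MvPolynomial (σ ⊕ τ) R} (hp : permuteX (Equiv.swap a b) p = p) : alternation p = 0 := by
  rw [alternation_apply]
  refine sum_involution (fun s _ => s * Equiv.swap a b) (fun s _ => ?_) (fun s _ _ h => ?_)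
    (fun _ _ => mem_univ _) fun s _ => ?_
  · rw [permuteX_mul, hp, Equiv.Perm.sign_mul, Equiv.Perm.sign_swap hab]
    simp
  · exact hab (Equiv.swap_eq_one_iff.mp (mul_eq_left.mp h))
  · rw [mul_assoc, Equiv.swap_mul_self, mul_one]

theorem alternation_prod_X_pow (e : σ → ℕ) :
    alternation (∏ v, X (Sum.inl v) ^ e v : MvPolynomial (σ ⊕ τ) R)
      = (Matrix.of fun v w => X (Sum.inl v) ^ e w).det := by
  simp [alternation_apply, Matrix.det_apply]

end Alternation

section Symmetry

variable {n r : ℕ} {μ : Fin n → ℕ} (i : Fin r)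

theorem permuteX_swap_classSum (hμ : IsPartition μ) {V₀ : cells μ → Fin n} (hV₀ : IsSSYT μ V₀)
    {a b : Fin n} (hab : (b : ℕ) = a + 1) {J : ℕ} (hJ : IsExchangeBoundary V₀ J a) :
    permuteX (Equiv.swap a b) (classSum V₀ J a (fun v => X (Sum.inl v))
        fun z => (X (Sum.inr (i, z)) : MvPolynomial (Fin n ⊕ Fin r × ℤ) ℤ))
      = classSum V₀ J a (fun v => X (Sum.inl v)) fun z => X (Sum.inr (i, z)) := by
  refine Eq.trans ?_ (classSum_comp_swap hμ hV₀ hab hJ)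
  simp [classSum]

theorem permuteX_factSchur (hμ : IsPartition μ) (s : Equiv.Perm (Fin n)) :
    permuteX s (factSchur n r i μ) = factSchur n r i μ := by
  refine permuteX_eq_of_forall_adjacent_swap (fun a b hab => ?_) s
  rw [factSchur, map_sum, ← sub_eq_zero, ← sum_sub_distrib]
  refine sum_cancels_of_partition_cancels
    (Setoid.ker fun V : cells μ → Fin n => fun c => merge a (V c)) fun V₀ hV₀ => ?_
  have left (c : cells μ) : c.1.2 < univ.sup μ := col_lt_sup c
  have hJ : IsExchangeBoundary V₀ (univ.sup μ) a := fun _ c hc => absurd hc (left c).ne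
  have class_eq : ({V ∈ {V | IsSSYT μ V} | Setoid.ker (fun V c => merge a (V c)) V V₀} : Finset _)
      = exchangeClass V₀ (univ.sup μ) a := by
    ext V
    simp [exchangeClass, left, Setoid.ker_def, funext_iff]
  have hsymm := permuteX_swap_classSum i hμ (mem_filter.mp hV₀).2 hab hJ
  rw [class_eq, sum_sub_distrib, sub_eq_zero, ← map_sum]
  simpa only [classSum, left, filter_true] using hsymm

end Symmetry

section Words

theorem isYam_append_iff {u v : List ℕ} (hv : v.Pairwise (· < ·)) :
    IsYam (u ++ v) ↔ IsYam u ∧ ∀ k, (u ++ v).count (k + 1) ≤ (u ++ v).count k := by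
  refine ⟨fun h => ⟨fun t k => ?_, fun k => ?_⟩,
    fun ⟨hu, huv⟩ t k => ?_⟩
  · have := h (min t u.length) k
    rwa [List.take_append_of_le_length (min_le_right _ _), ← List.take_eq_take_min] at this
  · simpa only [List.take_length] using h (u ++ v).length k
  · have huk : u.count (k + 1) ≤ u.count k := by simpa using hu u.length k
    rcases le_total t u.length with ht | ht
    · rw [List.take_append_of_le_length ht]
      exact hu t k
    · rw [List.take_append, List.take_of_length_le ht, List.count_append, List.count_append]
      by_cases hmem : k + 1 ∈ v.take (t - u.length)
      · have hdrop : (v.drop (t - u.length)).count k = 0 := by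
          rw [← List.take_append_drop (t - u.length) v, List.pairwise_append] at hv
          exact List.count_eq_zero.mpr fun hk => absurd (hv.2.2 _ hmem _ hk) (by lia)
        have hsplit (l : ℕ) : v.count l
            = (v.take (t - u.length)).count l + (v.drop (t - u.length)).count l := by
          rw [← List.count_append, List.take_append_drop]
        have := huv k
        rw [List.count_append, List.count_append, hsplit, hsplit, hdrop] at this
        lia
      · rw [List.count_eq_zero.mpr hmem]
        lia

theorem isYam_flatMap_iff {ι : Type*} [LinearOrder ι] {l : List ι} (hl : l.Pairwise (· < ·))
    {f : ι → List ℕ} (hf : ∀ p, (f p).Pairwise (· < ·)) :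
    IsYam (l.flatMap f) ↔ ∀ p ∈ l, ∀ k, ((l.filter (· ≤ p)).flatMap f).count (k + 1)
      ≤ ((l.filter (· ≤ p)).flatMap f).count k := by
  induction l using List.reverseRecOn with
  | nil => simp [IsYam]
  | append_singleton l q ih =>
    rw [List.pairwise_append] at hl
    have lt (p) (hp : p ∈ l) : p < q := hl.2.2 p hp q (List.mem_singleton.mpr rfl)
    have filter_last : (l ++ [q]).filter (· ≤ q) = l ++ [q] := by
      rw [List.filter_eq_self]
      simpa [or_imp, forall_and] using fun p hp => (lt p hp).le
    have filter_init (p) (hp : p ∈ l) : (l ++ [q]).filter (· ≤ p) = l.filter (· ≤ p) := by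
      simp [lt p hp]
    rw [List.flatMap_append, List.flatMap_singleton, isYam_append_iff (hf q), ih hl.1]
    simp only [List.forall_mem_append, List.forall_mem_singleton, filter_last, List.flatMap_append,
      List.flatMap_singleton]
    refine and_congr_left fun _ => forall₂_congr fun p hp => ?_
    rw [filter_init p hp]

variable {n r : ℕ} {lam : Fin r → Fin n → ℕ}

/-- The positions of the columns of a skew diagram, in reading order: the column `j` of the diagram
`i` is `(i, j)`, and within a diagram the columns are read from right to left. -/
abbrev ColPos (r : ℕ) : Type := Fin r ×ₗ ℕᵒᵈ

/-- The position of the column `j` of the diagram `i`. -/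
def colPos (i : Fin r) (j : ℕ) : ColPos r := toLex (i, OrderDual.toDual j)

theorem colPos_lt_colPos {i i' : Fin r} {j j' : ℕ} :
    colPos i j < colPos i' j' ↔ i < i' ∨ i = i' ∧ j' < j := by
  simp [colPos, Prod.Lex.toLex_lt_toLex]

theorem colPos_inj {i i' : Fin r} {j j' : ℕ} : colPos i j = colPos i' j' ↔ i = i' ∧ j = j' := by
  simp [colPos]

/-- The columns visited by `colWord`, in reading order. -/
def columns (lam : Fin r → Fin n → ℕ) : List (ColPos r) :=
  (List.finRange r).flatMap fun i => (List.range (univ.sup (lam i))).reverse.map (colPos i)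

theorem pairwise_columns : (columns lam).Pairwise (· < ·) := by
  refine List.pairwise_flatMap.mpr ⟨fun i _ => ?_, ?_⟩
  · rw [List.pairwise_map, List.pairwise_reverse]
    exact List.pairwise_lt_range.imp fun h => colPos_lt_colPos.mpr (.inr ⟨rfl, h⟩)
  · refine (List.pairwise_lt_finRange r).imp fun h => ?_
    simp only [List.mem_map]
    rintro _ ⟨j, -, rfl⟩ _ ⟨j', -, rfl⟩
    exact colPos_lt_colPos.mpr (.inl h)

/-- The cells of a skew diagram. -/
abbrev SkewCell (lam : Fin r → Fin n → ℕ) : Type := (i : Fin r) × cells (lam i)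

/-- The position of the column containing a cell. -/
def SkewCell.col (c : SkewCell lam) : ColPos r := colPos c.1 c.2.1.2

theorem SkewCell.col_mem_columns (c : SkewCell lam) : c.col ∈ columns lam := by
  have h := col_lt_sup c.2
  exact List.mem_flatMap.mpr ⟨c.1, List.mem_finRange _, List.mem_map.mpr ⟨_, by simpa using h, rfl⟩⟩

variable (T : (i : Fin r) → cells (lam i) → Fin n × Bool)

/-- The part of the unbarred column word contributed by the column at position `p`. -/
noncomputable def columnWord (p : ColPos r) : List ℕ :=
  (List.finRange n).filterMap fun i =>
    if h : (i, OrderDual.ofDual (ofLex p).2) ∈ cells (lam (ofLex p).1) then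
      if (T _ ⟨_, h⟩).2 = false then some ((T _ ⟨_, h⟩).1 : ℕ) else none
    else none

theorem colWord_eq_flatMap : colWord lam T = (columns lam).flatMap (columnWord T) := by
  simp only [columns, List.flatMap_assoc, List.flatMap_map]
  rfl

/-- The number of unbarred letters `k` in the columns with position in `S`. -/
noncomputable def unbarredCount (S : Set (ColPos r)) (k : ℕ) : ℕ :=
  #{c : SkewCell lam | c.col ∈ S ∧ (T c.1 c.2).2 = false ∧ ((T c.1 c.2).1 : ℕ) = k}

variable {T}

theorem pairwise_columnWord (hT : IsBarredSkew lam T) (p : ColPos r) :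
    (columnWord T p).Pairwise (· < ·) := by
  refine (List.pairwise_lt_finRange n).filterMap _ fun i i' hii' v hv v' hv' => ?_
  simp only [Option.dite_none_right_eq_some, Option.ite_none_right_eq_some,
    Option.some_inj] at hv hv'
  obtain ⟨h, -, rfl⟩ := hv
  obtain ⟨h', -, rfl⟩ := hv'
  exact (hT _).2 ⟨_, h⟩ ⟨_, h'⟩ rfl hii'

theorem count_columnWord (p : ColPos r) (k : ℕ) :
    (columnWord T p).count k = unbarredCount T {p} k := by
  rw [columnWord, List.count_filterMap, List.countP_eq_length_filter, unbarredCount]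
  refine (List.toFinset_card_of_nodup ((List.nodup_finRange n).filter _)).symm.trans ?_
  refine (card_bij (fun c _ => c.2.1.1) ?_ ?_ ?_).symm
  · simp only [mem_filter_univ]
    rintro ⟨i, c⟩ ⟨rfl, hc⟩
    simp [SkewCell.col, colPos, hc]
  · simp only [mem_filter_univ]
    rintro ⟨i, c⟩ ⟨hcp, -⟩ ⟨i', c'⟩ ⟨rfl, -⟩ hrow
    obtain ⟨rfl, hcol⟩ := colPos_inj.mp hcp
    exact congrArg (Sigma.mk i) (Subtype.ext (Prod.ext hrow hcol))
  · intro i hi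
    have hi := (List.mem_filter.mp (List.mem_toFinset.mp hi)).2
    simp only [beq_iff_eq, Option.dite_none_right_eq_some, Option.ite_none_right_eq_some,
      Option.some_inj] at hi
    obtain ⟨h, hi⟩ := hi
    exact ⟨⟨_, ⟨_, h⟩⟩, by simp [SkewCell.col, colPos, hi], rfl⟩

theorem count_flatMap_columnWord_filter_le (p : ColPos r) (k : ℕ) :
    (((columns lam).filter (· ≤ p)).flatMap (columnWord T)).count k
      = unbarredCount T (Set.Iic p) k := by
  have nodup : ((columns lam).filter (· ≤ p)).Nodup := pairwise_columns.nodup.filter _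
  rw [List.count_flatMap, ← List.sum_toFinset _ nodup, unbarredCount,
    card_eq_sum_card_fiberwise (f := SkewCell.col)
      (t := ((columns lam).filter (· ≤ p)).toFinset) fun c hc => ?_]
  · refine sum_congr rfl fun q hq => ?_
    have hqp : q ≤ p := by simpa using (List.mem_filter.mp (List.mem_toFinset.mp hq)).2
    rw [Function.comp_apply, count_columnWord, unbarredCount]
    refine congrArg card (Finset.ext fun c => ?_)
    simp only [mem_filter, mem_univ, true_and, Set.mem_singleton_iff, Set.mem_Iic]
    exact ⟨fun h => ⟨⟨h.1.trans_le hqp, h.2⟩, h.1⟩, fun h => ⟨h.2, h.1.2⟩⟩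
  · simpa [SkewCell.col_mem_columns] using (mem_filter.mp (mem_coe.mp hc)).2.1

theorem isYam_colWord_iff (hT : IsBarredSkew lam T) :
    IsYam (colWord lam T) ↔ ∀ p ∈ columns lam, ∀ k,
      unbarredCount T (Set.Iic p) (k + 1) ≤ unbarredCount T (Set.Iic p) k := by
  simp_rw [colWord_eq_flatMap, isYam_flatMap_iff pairwise_columns (pairwise_columnWord hT),
    count_flatMap_columnWord_filter_le]

end Words

section FirstFailure

variable {n r : ℕ} {lam : Fin r → Fin n → ℕ} {T T' : (i : Fin r) → cells (lam i) → Fin n × Bool}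
  {p : ColPos r} {k : ℕ}

theorem unbarredCount_congr {S S' : Set (ColPos r)}
    (hS : ∀ c : SkewCell lam, c.col ∈ S ↔ c.col ∈ S')
    (hT : ∀ c : SkewCell lam, c.col ∈ S → T c.1 c.2 = T' c.1 c.2) :
    unbarredCount T S k = unbarredCount T' S' k := by
  refine congrArg card (Finset.ext fun c => ?_)
  simp only [mem_filter, mem_univ, true_and, ← hS]
  exact and_congr_right fun hc => by rw [hT c hc]

theorem unbarredCount_Iic (T : (i : Fin r) → cells (lam i) → Fin n × Bool) (p : ColPos r) (k : ℕ) :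
    unbarredCount T (Set.Iic p) k = unbarredCount T (Set.Iio p) k + unbarredCount T {p} k := by
  rw [unbarredCount, unbarredCount, unbarredCount, ← card_union_of_disjoint]
  · refine congrArg card (Finset.ext fun c => ?_)
    simp only [mem_union, mem_filter, mem_univ, true_and, Set.mem_Iic, Set.mem_Iio,
      Set.mem_singleton_iff, le_iff_lt_or_eq, or_and_right]
  · refine disjoint_left.mpr fun c hc hc' => ?_
    simp only [mem_filter, mem_univ, true_and, Set.mem_Iio, Set.mem_singleton_iff] at hc hc'
    exact hc.1.ne hc'.1

theorem unbarredCount_singleton_le_one (hT : IsBarredSkew lam T) :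
    unbarredCount T {p} k ≤ 1 := by
  rw [← count_columnWord]
  exact List.nodup_iff_count_le_one.mp (pairwise_columnWord hT p).nodup k

/-- The condition for `colWord` to be Yamanouchi fails for the letter `k` at the end of the column
`p`. -/
def FailsAt (T : (i : Fin r) → cells (lam i) → Fin n × Bool) (p : ColPos r) (k : ℕ) : Prop :=
  unbarredCount T (Set.Iic p) k < unbarredCount T (Set.Iic p) (k + 1)

/-- The Yamanouchi condition fails for the first time at the column `p`, where `k` is the least
letter for which it fails. -/
def IsFirstFailure (T : (i : Fin r) → cells (lam i) → Fin n × Bool) (p : ColPos r) (k : ℕ) : Prop :=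
  IsLeast {q | q ∈ columns lam ∧ ∃ l, FailsAt T q l} p ∧ IsLeast {l | FailsAt T p l} k

theorem not_isYam_iff_exists_isFirstFailure (hT : IsBarredSkew lam T) :
    ¬ IsYam (colWord lam T) ↔ ∃ p k, IsFirstFailure T p k := by
  rw [isYam_colWord_iff hT]
  push Not
  constructor
  · rintro ⟨q, hq, l, hl⟩
    have hs : {q ∈ (columns lam).toFinset | ∃ l, FailsAt T q l}.Nonempty :=
      ⟨q, mem_filter.mpr ⟨List.mem_toFinset.mpr hq, l, hl⟩⟩
    have hp := isLeast_min' _ hs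
    simp only [coe_filter, List.mem_toFinset] at hp
    exact ⟨_, _, hp, Nat.find_spec hp.1.2, fun _ h => Nat.find_min' _ h⟩
  · rintro ⟨p, k, h, hk⟩
    exact ⟨p, h.1.1, k, hk.1⟩

theorem IsFirstFailure.unique (h : IsFirstFailure T p k) {p' : ColPos r} {k' : ℕ}
    (h' : IsFirstFailure T p' k') : p = p' ∧ k = k' := by
  obtain rfl := h.1.unique h'.1
  exact ⟨rfl, h.2.unique h'.2⟩

theorem IsFirstFailure.congr (h : IsFirstFailure T p k)
    (hT : ∀ c : SkewCell lam, c.col ≤ p → T c.1 c.2 = T' c.1 c.2) : IsFirstFailure T' p k := by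
  have failsAt_iff {q : ColPos r} (hq : q ≤ p) (l : ℕ) : FailsAt T' q l ↔ FailsAt T q l := by
    have count_eq (l : ℕ) : unbarredCount T' (Set.Iic q) l = unbarredCount T (Set.Iic q) l :=
      unbarredCount_congr (fun _ => Iff.rfl) fun c hc => (hT c (le_trans hc hq)).symm
    rw [FailsAt, FailsAt, count_eq, count_eq]
  obtain ⟨⟨⟨hp, l, hl⟩, hleast⟩, hk⟩ := h
  refine ⟨⟨⟨hp, l, (failsAt_iff le_rfl l).mpr hl⟩, fun q ⟨hq, l, hl⟩ => ?_⟩, ?_⟩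
  · exact (le_total p q).elim id fun hqp => hleast ⟨hq, l, (failsAt_iff hqp l).mp hl⟩
  · simpa only [failsAt_iff le_rfl] using hk

theorem IsFirstFailure.unbarredCount_Iio_succ_le (h : IsFirstFailure T p k) (l : ℕ) :
    unbarredCount T (Set.Iio p) (l + 1) ≤ unbarredCount T (Set.Iio p) l := by
  rcases {q ∈ (columns lam).toFinset | q < p}.eq_empty_or_nonempty with hempty | hne
  · have hcol (c : SkewCell lam) : ¬ c.col < p :=
      filter_eq_empty_iff.mp hempty (List.mem_toFinset.mpr c.col_mem_columns)
    simp [unbarredCount, hcol]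
  · set q := max' _ hne
    obtain ⟨hq, hqp⟩ := mem_filter.mp (max'_mem _ hne)
    have hcol (c : SkewCell lam) : c.col ∈ Set.Iio p ↔ c.col ∈ Set.Iic q :=
      ⟨fun hc => le_max' _ _ (mem_filter.mpr ⟨List.mem_toFinset.mpr c.col_mem_columns, hc⟩),
        fun hc => lt_of_le_of_lt hc hqp⟩
    rw [unbarredCount_congr hcol fun _ _ => rfl, unbarredCount_congr hcol fun _ _ => rfl]
    by_contra! hlt
    exact hqp.not_ge (h.1.2 ⟨List.mem_toFinset.mp hq, l, hlt⟩)

theorem IsFirstFailure.unbarredCount_eq (hT : IsBarredSkew lam T) (h : IsFirstFailure T p k) :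
    unbarredCount T (Set.Iic p) (k + 1) = unbarredCount T (Set.Iic p) k + 1 ∧
      unbarredCount T {p} (k + 1) = 1 := by
  have fails : unbarredCount T (Set.Iic p) k < unbarredCount T (Set.Iic p) (k + 1) := h.2.1
  have before := h.unbarredCount_Iio_succ_le k
  have le_one := unbarredCount_singleton_le_one (p := p) (k := k + 1) hT
  simp only [unbarredCount_Iic] at fails ⊢
  lia

theorem IsFirstFailure.exists_cell (hT : IsBarredSkew lam T) (h : IsFirstFailure T p k) :
    ∃ c : SkewCell lam, c.col = p ∧ ((T c.1 c.2).1 : ℕ) = k + 1 := by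
  have hcard : 0 < unbarredCount T {p} (k + 1) := by
    rw [(h.unbarredCount_eq hT).2]
    exact one_pos
  obtain ⟨c, hc⟩ := card_pos.mp hcard
  simp only [mem_filter_univ, Set.mem_singleton_iff] at hc
  exact ⟨c, hc.1, hc.2.2⟩

end FirstFailure

section Cancellation

variable {n r : ℕ} {lam : Fin r → Fin n → ℕ} {T T₀ : (i : Fin r) → cells (lam i) → Fin n × Bool}
  {p : ColPos r} {k : ℕ}

/-- The number of columns of the diagram `i` which are read after the column at position `p`. -/
def leftWidth (lam : Fin r → Fin n → ℕ) (p : ColPos r) (i : Fin r) : ℕ :=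
  if i < (ofLex p).1 then 0
  else if i = (ofLex p).1 then OrderDual.ofDual (ofLex p).2 else univ.sup (lam i)

theorem SkewCell.lt_col_iff (c : SkewCell lam) : p < c.col ↔ c.2.1.2 < leftWidth lam p c.1 := by
  have hp : p = colPos (ofLex p).1 (OrderDual.ofDual (ofLex p).2) := rfl
  have hc := col_lt_sup c.2
  rw [hp, SkewCell.col, colPos_lt_colPos, ← hp, leftWidth]
  split_ifs <;> lia

theorem isExchangeBoundary_leftWidth (hT : IsBarredSkew lam T) (h : IsFirstFailure T p k)
    (i : Fin r) : IsExchangeBoundary (Prod.fst ∘ T i) (leftWidth lam p i) k := by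
  intro hpos c hcol hck
  obtain ⟨⟨i', d⟩, hd, hdk⟩ := h.exists_cell hT
  have hc := col_lt_sup c
  have hi : i = (ofLex p).1 := by
    rw [leftWidth] at hpos hcol
    split_ifs at hpos hcol <;> lia
  obtain ⟨rfl, hdcol⟩ : i' = (ofLex p).1 ∧ d.1.2 = OrderDual.ofDual (ofLex p).2 :=
    colPos_inj.mp hd
  subst hi
  refine ⟨d, ?_, hdk⟩
  rw [leftWidth, if_neg (lt_irrefl _), if_pos rfl]
  exact hdcol

/-- The part of a tableau which is preserved by the exchanges of letters `k` and `k + 1`, and by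
all changes of bars, in the columns read after the column at position `p`. -/
noncomputable def exchangeInvariant (p : ColPos r) (k : ℕ)
    (T : (i : Fin r) → cells (lam i) → Fin n × Bool) (c : SkewCell lam) : ℕ ⊕ Fin n × Bool :=
  if p < c.col then Sum.inl (merge k (T c.1 c.2).1) else Sum.inr (T c.1 c.2)

theorem exchangeInvariant_eq_iff :
    exchangeInvariant p k T = exchangeInvariant p k T₀ ↔
      ∀ i c, if c.1.2 < leftWidth lam p i then merge k (T i c).1 = merge k (T₀ i c).1
        else T i c = T₀ i c := by
  rw [funext_iff, Sigma.forall]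
  refine forall₂_congr fun i c => ?_
  have hc := SkewCell.lt_col_iff (p := p) (⟨i, c⟩ : SkewCell lam)
  rw [exchangeInvariant, exchangeInvariant]
  simp only [hc]
  split_ifs <;> simp

theorem mem_piFinset_barredClass_iff (h : IsFirstFailure T₀ p k) :
    T ∈ Fintype.piFinset (fun i => barredClass (T₀ i) (leftWidth lam p i) k) ↔
      (IsBarredSkew lam T ∧ IsFirstFailure T p k) ∧
        exchangeInvariant p k T = exchangeInvariant p k T₀ := by
  have mem_iff : T ∈ Fintype.piFinset (fun i => barredClass (T₀ i) (leftWidth lam p i) k) ↔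
      IsBarredSkew lam T ∧ exchangeInvariant p k T = exchangeInvariant p k T₀ := by
    rw [exchangeInvariant_eq_iff]
    simp only [Fintype.mem_piFinset, barredClass, mem_filter_univ, forall_and, IsBarredSkew]
  rw [mem_iff, and_assoc, and_congr_right_iff]
  refine fun _ => (and_iff_right_of_imp fun hT => h.congr fun c hc => ?_).symm
  have := exchangeInvariant_eq_iff.mp hT c.1 c.2
  rw [if_neg (c.lt_col_iff.not.mp hc.not_gt)] at this
  exact this.symm

variable (T)

/-- The weight of the entry of a tableau in a given cell. -/
noncomputable def cellWeight (c : SkewCell lam) : MvPolynomial (Fin n ⊕ Fin r × ℤ) ℤ :=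
  entryWeight (fun v => X (Sum.inl v)) (fun z => X (Sum.inr (c.1, z))) c.2 (T c.1 c.2)

theorem prod_cellWeight (s : Finset (SkewCell lam)) :
    ∏ c ∈ s, cellWeight T c
      = (∏ v : Fin n, X (Sum.inl v) ^ #{c ∈ s | T c.1 c.2 = (v, false)}) *
        rename Sum.inr (∏ c ∈ s with (T c.1 c.2).2 = true, X (c.1, ysub (T c.1 c.2).1 c.2)) := by
  rw [← prod_filter_mul_prod_filter_not _ (fun c : SkewCell lam => (T c.1 c.2).2 = false)]
  refine congrArg₂ (· * ·) ?_ ?_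
  · rw [← prod_fiberwise _ (fun c : SkewCell lam => (T c.1 c.2).1)]
    refine prod_congr rfl fun v _ => ?_
    simp only [filter_filter, Prod.ext_iff, and_comm]
    refine prod_eq_pow_card fun c hc => ?_
    simp [cellWeight, entryWeight, (mem_filter.mp hc).2]
  · simp only [map_prod, rename_X, Bool.not_eq_false]
    refine prod_congr rfl fun c hc => ?_
    simp [cellWeight, entryWeight, (mem_filter.mp hc).2]

theorem prod_cellWeight_univ :
    ∏ c : SkewCell lam, cellWeight T c
      = (∏ v : Fin n, X (Sum.inl v) ^ contentT lam T v) * rename Sum.inr (cT lam T) := by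
  have unbarred (v : Fin n) : contentT lam T v = #{c : SkewCell lam | T c.1 c.2 = (v, false)} := by
    simp only [contentT, content1, card_eq_sum_ones, sum_filter, Fintype.sum_sigma]
  have barred : cT lam T = ∏ c : SkewCell lam with (T c.1 c.2).2 = true,
      X (c.1, ysub (T c.1 c.2).1 c.2) := by
    simp only [cT, cT1, prod_filter, Fintype.prod_sigma]
  simp only [prod_cellWeight, unbarred, barred]

theorem sum_piFinset_prod_cellWeight (s : (i : Fin r) → Finset (cells (lam i) → Fin n × Bool)) :
    ∑ T ∈ Fintype.piFinset s, ∏ c : SkewCell lam, cellWeight T c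
      = ∏ i, ∑ t ∈ s i, ∏ c : cells (lam i),
          entryWeight (fun v => X (Sum.inl v)) (fun z => X (Sum.inr (i, z))) c (t c) := by
  simp only [prod_univ_sum, Fintype.prod_sigma, cellWeight]

theorem sum_barredClass_prod_cellWeight (T₀ : (i : Fin r) → cells (lam i) → Fin n × Bool)
    (p : ColPos r) (k : ℕ) :
    ∑ T ∈ Fintype.piFinset fun i => barredClass (T₀ i) (leftWidth lam p i) k,
        ∏ c : SkewCell lam, cellWeight T c
      = (∏ c : SkewCell lam with c.col ≤ p, cellWeight T₀ c) *
        ∏ i, classSum (Prod.fst ∘ T₀ i) (leftWidth lam p i) k (fun v => X (Sum.inl v))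
          fun z => X (Sum.inr (i, z)) := by
  have outside : ∏ c : SkewCell lam with c.col ≤ p, cellWeight T₀ c
      = ∏ i, ∏ c : cells (lam i) with ¬ c.1.2 < leftWidth lam p i, cellWeight T₀ ⟨i, c⟩ := by
    simp only [prod_filter, Fintype.prod_sigma, ← not_lt, SkewCell.lt_col_iff]
  rw [outside, sum_piFinset_prod_cellWeight, ← prod_mul_distrib]
  simp only [sum_barredClass_prod_entryWeight, cellWeight]

theorem alternation_prod_cellWeight :
    alternation ((∏ v, X (Sum.inl v) ^ rhoPart n v) * ∏ c : SkewCell lam, cellWeight T c)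
      = rename Sum.inr (cT lam T) * avand n r (fun v => rhoPart n v + contentT lam T v) := by
  rw [prod_cellWeight_univ, ← mul_assoc, ← prod_mul_distrib,
    alternation_mul_of_forall_permuteX_eq _ fun s => permuteX_rename_inr s _, mul_comm]
  simp only [← pow_add]
  rw [alternation_prod_X_pow, avand]

variable {T}

theorem IsFirstFailure.alternation_sum_barredClass_eq_zero (hlam : ∀ i, IsPartition (lam i))
    (hT : IsBarredSkew lam T) (h : IsFirstFailure T p k) :
    alternation ((∏ v, X (Sum.inl v) ^ rhoPart n v) *
      ∑ T' ∈ Fintype.piFinset fun i => barredClass (T i) (leftWidth lam p i) k,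
        ∏ c : SkewCell lam, cellWeight T' c) = 0 := by
  obtain ⟨⟨i, c⟩, -, hb⟩ := h.exists_cell hT
  set b := (T i c).1
  obtain ⟨a, rfl⟩ : ∃ a : Fin n, (a : ℕ) = k := ⟨⟨k, by lia⟩, rfl⟩
  have count (v : Fin n) : #{c ∈ {c : SkewCell lam | c.col ≤ p} | T c.1 c.2 = (v, false)}
      = unbarredCount T (Set.Iic p) v := by
    refine congrArg card (Finset.ext fun c => ?_)
    simp only [mem_filter, mem_univ, true_and, Set.mem_Iic, Prod.ext_iff, Fin.ext_iff, and_comm]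
  have exponent_eq : rhoPart n a + unbarredCount T (Set.Iic p) a
      = rhoPart n b + unbarredCount T (Set.Iic p) b := by
    rw [hb, (h.unbarredCount_eq hT).1, rhoPart, rhoPart]
    lia
  have hmonomial := permuteX_swap_prod_X_pow (τ := Fin r × ℤ) (R := ℤ)
    (e := fun v => rhoPart n v + unbarredCount T (Set.Iic p) v) exponent_eq
  have hclass (i : Fin r) := permuteX_swap_classSum i (hlam i) (hT i) hb
    (isExchangeBoundary_leftWidth hT h i)
  refine alternation_eq_zero_of_permuteX_swap_eq (a := a) (b := b) (by lia) ?_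
  rw [sum_barredClass_prod_cellWeight, prod_cellWeight]
  simp only [← mul_assoc, ← prod_mul_distrib, ← pow_add, count]
  rw [map_mul, map_mul, hmonomial, permuteX_rename_inr,
    map_prod (permuteX _)]
  exact congrArg _ (prod_congr rfl fun i _ => hclass i)

theorem sum_isFirstFailure_eq_zero (hlam : ∀ i, IsPartition (lam i)) (p : ColPos r) (k : ℕ) :
    ∑ T : (i : Fin r) → cells (lam i) → Fin n × Bool with
        IsBarredSkew lam T ∧ IsFirstFailure T p k,
      rename Sum.inr (cT lam T) * avand n r (fun v => rhoPart n v + contentT lam T v) = 0 := by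
  refine sum_cancels_of_partition_cancels (Setoid.ker (exchangeInvariant p k)) fun T₀ hT₀ => ?_
  obtain ⟨hT₀, h⟩ := (mem_filter.mp hT₀).2
  simp only [← alternation_prod_cellWeight]
  have class_eq : ({T ∈ {T | IsBarredSkew lam T ∧ IsFirstFailure T p k} |
      Setoid.ker (exchangeInvariant p k) T T₀} : Finset _)
      = Fintype.piFinset fun i => barredClass (T₀ i) (leftWidth lam p i) k := by
    ext T
    rw [mem_piFinset_barredClass_iff h, mem_filter, mem_filter_univ, Setoid.ker_def]
  rw [class_eq, ← map_sum alternation, ← mul_sum, h.alternation_sum_barredClass_eq_zero hlam hT₀]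

theorem sum_not_isYam_eq_zero (hlam : ∀ i, IsPartition (lam i)) :
    ∑ T : (i : Fin r) → cells (lam i) → Fin n × Bool with
        IsBarredSkew lam T ∧ ¬ IsYam (colWord lam T),
      rename Sum.inr (cT lam T) * avand n r (fun v => rhoPart n v + contentT lam T v) = 0 := by
  refine sum_cancels_of_partition_cancels (Setoid.ker fun T =>
    {q : ColPos r × ℕ | IsFirstFailure T q.1 q.2}) fun T₀ hT₀ => ?_
  obtain ⟨hT₀, hyam⟩ := (mem_filter.mp hT₀).2
  obtain ⟨p, k, h⟩ := (not_isYam_iff_exists_isFirstFailure hT₀).mp hyam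
  have same_failure_iff (T : (i : Fin r) → cells (lam i) → Fin n × Bool) :
      {q : ColPos r × ℕ | IsFirstFailure T q.1 q.2} = {q | IsFirstFailure T₀ q.1 q.2} ↔
        IsFirstFailure T p k := by
    refine ⟨fun hTT₀ => hTT₀.ge (show (p, k) ∈ {q | _} from h),
      fun hT => Set.ext fun q => ⟨fun hq => ?_, fun hq => ?_⟩⟩
    · obtain ⟨rfl, rfl⟩ := hT.unique hq
      exact h
    · obtain ⟨rfl, rfl⟩ := h.unique hq
      exact hT
  have class_eq : {T ∈ ({T | IsBarredSkew lam T ∧ ¬ IsYam (colWord lam T)} : Finset _) |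
        Setoid.ker (fun T => {q : ColPos r × ℕ | IsFirstFailure T q.1 q.2}) T T₀}
      = ({T | IsBarredSkew lam T ∧ IsFirstFailure T p k} : Finset _) := by
    ext T
    rw [mem_filter, mem_filter_univ, mem_filter_univ, Setoid.ker_def, same_failure_iff, and_assoc]
    exact and_congr_right fun hT => and_iff_right_of_imp fun hTpk =>
      (not_isYam_iff_exists_isFirstFailure hT).mpr ⟨p, k, hTpk⟩
  rw [class_eq, sum_isFirstFailure_eq_zero hlam]

theorem prod_factSchur (lam : Fin r → Fin n → ℕ) :
    ∏ i, factSchur n r i (lam i)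
      = ∑ T : (i : Fin r) → cells (lam i) → Fin n × Bool with IsBarredSkew lam T,
          ∏ c : SkewCell lam, cellWeight T c := by
  have tableaux : ({T | IsBarredSkew lam T} : Finset ((i : Fin r) → cells (lam i) → Fin n × Bool))
      = Fintype.piFinset fun i => {t | IsBarred (lam i) t} := by
    ext T
    simp only [mem_filter_univ, Fintype.mem_piFinset]
    rfl
  rw [tableaux, sum_piFinset_prod_cellWeight]
  simp only [sum_isBarred_prod_entryWeight, factSchur]

theorem avand_rhoPart_mul_prod_factSchur (hlam : ∀ i, IsPartition (lam i)) :
    avand n r (rhoPart n) * ∏ i, factSchur n r i (lam i)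
      = ∑ T : (i : Fin r) → cells (lam i) → Fin n × Bool with IsBarredSkew lam T,
        rename Sum.inr (cT lam T) * avand n r (fun v => rhoPart n v + contentT lam T v) := by
  have symmetric (s : Equiv.Perm (Fin n)) :
      permuteX s (∏ i, factSchur n r i (lam i)) = ∏ i, factSchur n r i (lam i) := by
    rw [map_prod]
    exact prod_congr rfl fun i _ => permuteX_factSchur i (hlam i) s
  rw [avand, ← alternation_prod_X_pow, ← alternation_mul_of_forall_permuteX_eq _ symmetric,
    prod_factSchur, mul_sum, map_sum]
  simp only [alternation_prod_cellWeight]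

end Cancellation

/-- Corollary 3.3: `a_ρ(x) · s_λ̄(x|y)` equals the sum of
`c_T(y) a_{ρ+ω(T)}(x)` over barred skew tableaux with Yamanouchi unbarred column word. -/
theorem alternant_times_factorial_schur_yam (n r : ℕ) (hn : 1 ≤ n) (hr : 1 ≤ r)
    (lam : Fin r → Fin n → ℕ) (hlam : ∀ i, IsPartition (lam i)) :
    avand n r (rhoPart n) * ∏ i, factSchur n r i (lam i)
      = ∑ T ∈ Finset.univ.filter
          (fun T : (i : Fin r) → cells (lam i) → Fin n × Bool =>
            IsBarredSkew lam T ∧ IsYam (colWord lam T)),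
        rename Sum.inr (cT lam T) * avand n r (fun k => rhoPart n k + contentT lam T k) := by
  rw [avand_rhoPart_mul_prod_factSchur hlam,
    ← sum_filter_add_sum_filter_not _ fun T => IsYam (colWord lam T), filter_filter, filter_filter,
    sum_not_isYam_eq_zero hlam, add_zero]
end

section
/- Let r ≥ 1 and let λ̄ = (λ^{(1)},…,λ^{(r)}) be a sequence of partitions in P_n. Then s_λ̄(x|y) = Σ c_T(y) · s_{ω(T)}(x), where the sum is over all barred skew tableaux T ∈ B_λ̄ whose unbarred column word is Yamanouchi. -/
open Finset MvPolynomial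

attribute [local instance] Classical.propDecidable

/-!
Cut a barred tableau into its columns. The generating function of the chains of columns that may
stand to the left of a column `S` is symmetric in `x_k` and `x_(k+1)` whenever `S` does not contain
`k` without `k + 1`: exchanging `k` and `k + 1` in the rightmost column of the chain pairs up the
summands. With `S` empty this is the symmetry of `s_λ(x|y)`, whence
`Alt(x^(ν+ρ)) * s_λ(x|y) = Alt(x^(ν+ρ) * s_λ(x|y))`, where `Alt` is antisymmetrization.

Expand the right-hand side one column at a time from the right. If the unbarred entries of a column
do not turn the partition `ν` into a partition again, then at some `k` the exponents of `x_k` and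
`x_(k+1)` become equal; the column contains `k + 1` unbarred, so the generating function of the
remaining columns is symmetric in these variables and the term vanishes. The surviving tableaux are
those whose unbarred column word is Yamanouchi when read after a word of content `ν`. For `y = 0`
and `ν = 0` only the tableau with all entries of row `i` equal to `i` survives: this is the
bialternant formula, by which dividing by `Alt(x^ρ)` turns alternants into Schur polynomials. It
gives the expansion of `s_ν(x) * s_λ(x|y)`, which iterates over the `r` diagrams starting with
`ν = 0`.
-/

namespace FactorialSchur

variable {n : ℕ} {A : Type*} [CommRing A]

/-! ### Symmetric polynomials and alternants -/

theorem antitone_of_succ_le {f : Fin n → ℕ} (h : ∀ k k' : Fin n, (k' : ℕ) = k + 1 → f k' ≤ f k) :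
    Antitone f := by
  cases n with
  | zero => exact fun i => i.elim0
  | succ n => exact Fin.antitone_iff_succ_le.2 fun i => h _ _ (by simp)

theorem isSymmetric_of_rename_swap {p : MvPolynomial (Fin n) A}
    (h : ∀ k k' : Fin n, (k' : ℕ) = k + 1 → rename (Equiv.swap k k') p = p) : p.IsSymmetric := by
  intro σ
  cases n with
  | zero => rw [Subsingleton.elim σ 1, Equiv.Perm.coe_one, rename_id_apply]
  | succ n =>
    have hσ : σ ∈ Submonoid.closure (Set.range fun i : Fin n ↦ Equiv.swap i.castSucc i.succ) := by
      rw [Equiv.Perm.mclosure_swap_castSucc_succ]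
      trivial
    induction hσ using Submonoid.closure_induction with
    | mem τ hτ =>
      obtain ⟨i, rfl⟩ := hτ
      exact h _ _ (by simp)
    | one => rw [Equiv.Perm.coe_one, rename_id_apply]
    | mul τ τ' _ _ hτ hτ' => rw [Equiv.Perm.coe_mul, ← rename_rename, hτ', hτ]

/-- The antisymmetrization `∑ σ, sign σ • σ p` of a polynomial `p`. -/
noncomputable def antisymmetrize : MvPolynomial (Fin n) A →ₗ[A] MvPolynomial (Fin n) A :=
  ∑ σ : Equiv.Perm (Fin n), (Equiv.Perm.sign σ : ℤ) • (rename σ).toLinearMap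

theorem antisymmetrize_apply (p : MvPolynomial (Fin n) A) :
    antisymmetrize p = ∑ σ : Equiv.Perm (Fin n), (Equiv.Perm.sign σ : ℤ) • rename σ p := by
  simp [antisymmetrize]

theorem antisymmetrize_mul_of_isSymmetric (p : MvPolynomial (Fin n) A)
    {q : MvPolynomial (Fin n) A} (hq : q.IsSymmetric) :
    antisymmetrize (p * q) = antisymmetrize p * q := by
  simp only [antisymmetrize_apply, sum_mul, map_mul, hq _, smul_mul_assoc]

theorem antisymmetrize_eq_zero {k k' : Fin n} (hk : k ≠ k') {p : MvPolynomial (Fin n) A}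
    (hp : rename (Equiv.swap k k') p = p) : antisymmetrize p = 0 := by
  rw [antisymmetrize_apply]
  refine sum_involution (fun σ _ => σ * Equiv.swap k k') (fun σ _ => ?_) (fun σ _ _ => ?_)
    (fun _ _ => mem_univ _) (fun σ _ => by simp [mul_assoc])
  · rw [Equiv.Perm.coe_mul, ← rename_rename, hp]
    simp [Equiv.Perm.sign_swap hk]
  · simpa [Equiv.swap_eq_one_iff] using hk

variable (A) in
/-- The monomial `x ^ e`. -/
noncomputable def xPow (e : Fin n → ℕ) : MvPolynomial (Fin n) A := ∏ i, X i ^ e i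

theorem xPow_add (e f : Fin n → ℕ) : xPow A (e + f) = xPow A e * xPow A f := by
  simp [xPow, pow_add, prod_mul_distrib]

theorem xPow_zero : xPow A (0 : Fin n → ℕ) = 1 := by simp [xPow]

theorem rename_xPow (σ : Equiv.Perm (Fin n)) (e : Fin n → ℕ) :
    rename σ (xPow A e) = xPow A (e ∘ σ.symm) := by
  simp only [xPow, map_prod, map_pow, rename_X, Function.comp_apply]
  exact Fintype.prod_equiv σ _ _ fun i => by simp

theorem rename_swap_xPow {k k' : Fin n} {e : Fin n → ℕ} (h : e k = e k') :
    rename (Equiv.swap k k') (xPow A e) = xPow A e := by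
  rw [rename_xPow, Equiv.symm_swap, Equiv.comp_swap_eq_update, h, Function.update_eq_self,
    ← h, Function.update_eq_self]

theorem antisymmetrize_xPow_rhoPart :
    antisymmetrize (xPow A (rhoPart n)) = ((Matrix.vandermonde
      (X : Fin n → MvPolynomial (Fin n) A)).submatrix id Fin.revPerm).det := by
  rw [antisymmetrize_apply, Matrix.det_apply]
  refine sum_congr rfl fun σ _ => ?_
  have hrho (i : Fin n) : rhoPart n i = i.rev := by simp only [rhoPart, Fin.val_rev]; omega
  simp [xPow, hrho, Units.smul_def]

theorem antisymmetrize_xPow_rhoPart_ne_zero [IsDomain A] :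
    antisymmetrize (xPow A (rhoPart n)) ≠ 0 := by
  rw [antisymmetrize_xPow_rhoPart, Matrix.det_permute']
  exact mul_ne_zero ((Units.isUnit _).map (Int.castRingHom _)).ne_zero
    (Matrix.det_vandermonde_ne_zero_iff.2 X_injective)

/-! ### Columns -/

/-- A strictly increasing column is encoded by its set of entries; `rank S q` is the number of
entries less than `q`, so that an entry `a` of the column lies in row `rank S a`. -/
noncomputable def rank (S : Finset (Fin n)) (q : ℕ) : ℕ := #{a ∈ S | a.val < q}

theorem rank_succ (S : Finset (Fin n)) (a : Fin n) :
    rank S (a + 1) = rank S a + if a ∈ S then 1 else 0 := by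
  have h : {b ∈ S | b.val < a.val + 1} = {b ∈ S | b.val < a.val} ∪ {b ∈ S | b = a} := by
    ext b
    simp only [mem_filter, mem_union, Fin.ext_iff]
    grind
  rw [rank, h, card_union_of_disjoint (disjoint_filter.2 fun b _ hb => by rintro rfl; omega),
    filter_eq', rank]
  split_ifs <;> simp

theorem rank_succ_succ {k k' : Fin n} (hk : (k' : ℕ) = k + 1) (S : Finset (Fin n)) :
    rank S (k + 2) = rank S k + (if k ∈ S then 1 else 0) + if k' ∈ S then 1 else 0 := by
  rw [← rank_succ, ← hk, ← rank_succ, hk]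

/-- `ColLE E S` says that the column `E` may stand to the left of the column `S` in a
semistandard tableau: it is at least as long, and its entries are weakly smaller row by row. -/
def ColLE (E S : Finset (Fin n)) : Prop := ∀ q, rank S q ≤ rank E q

theorem ColLE.trans {D E S : Finset (Fin n)} (h : ColLE D E) (h' : ColLE E S) : ColLE D S :=
  fun q => (h' q).trans (h q)

theorem colLE_empty (E : Finset (Fin n)) : ColLE E ∅ := fun q => by simp [rank]

/-- The column obtained from `S` by exchanging the letters `k` and `k'`. -/
def swapCol (k k' : Fin n) (S : Finset (Fin n)) : Finset (Fin n) :=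
  S.map (Equiv.swap k k').toEmbedding

theorem mem_swapCol {k k' a : Fin n} {S : Finset (Fin n)} :
    a ∈ swapCol k k' S ↔ Equiv.swap k k' a ∈ S := by
  simp [swapCol, mem_map_equiv]

theorem left_mem_swapCol {k k' : Fin n} {S : Finset (Fin n)} : k ∈ swapCol k k' S ↔ k' ∈ S := by
  rw [mem_swapCol, Equiv.swap_apply_left]

theorem right_mem_swapCol {k k' : Fin n} {S : Finset (Fin n)} : k' ∈ swapCol k k' S ↔ k ∈ S := by
  rw [mem_swapCol, Equiv.swap_apply_right]

theorem card_swapCol (k k' : Fin n) (S : Finset (Fin n)) : #(swapCol k k' S) = #S := card_map _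

theorem swapCol_swapCol (k k' : Fin n) (S : Finset (Fin n)) :
    swapCol k k' (swapCol k k' S) = S := by
  ext a
  simp [mem_swapCol]

theorem swapCol_eq_self {k k' : Fin n} {S : Finset (Fin n)} (h : k ∈ S ↔ k' ∈ S) :
    swapCol k k' S = S := by
  ext a
  rw [mem_swapCol, Equiv.swap_apply_def]
  split_ifs <;> simp_all

theorem swapCol_erase (k k' : Fin n) (S : Finset (Fin n)) (hk' : k' ∉ S) :
    (swapCol k k' S).erase k' = S.erase k := by
  ext a
  rw [mem_erase, mem_swapCol, mem_erase, Equiv.swap_apply_def]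
  split_ifs <;> simp_all

theorem rank_swapCol {k k' : Fin n} (hk : (k' : ℕ) = k + 1) (S : Finset (Fin n)) {q : ℕ}
    (hq : q ≠ k + 1) : rank (swapCol k k' S) q = rank S q := by
  rw [rank, swapCol, filter_map, card_map, rank]
  congr 1
  refine filter_congr fun a _ => ?_
  simp only [Function.comp_apply, Equiv.coe_toEmbedding, Equiv.swap_apply_def]
  split_ifs <;> grind

theorem rank_swapCol_succ {k k' : Fin n} (hk : (k' : ℕ) = k + 1) (S : Finset (Fin n)) :
    rank (swapCol k k' S) (k + 1) = rank S k + if k' ∈ S then 1 else 0 := by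
  rw [rank_succ, rank_swapCol hk S (by omega)]
  simp only [left_mem_swapCol]

theorem ColLE.swapCol_left {k k' : Fin n} (hk : (k' : ℕ) = k + 1) {E S : Finset (Fin n)}
    (hS : k ∈ S → k' ∈ S) (h : ColLE E S) : ColLE (swapCol k k' E) S := by
  intro q
  rcases eq_or_ne q (k + 1) with rfl | hq
  · have h₀ := h k
    have h₂ := h (k + 2)
    rw [rank_succ_succ hk, rank_succ_succ hk] at h₂
    rw [rank_swapCol_succ hk, rank_succ]
    grind
  · exact (h q).trans_eq (rank_swapCol hk E hq).symm

theorem ColLE.swapCol_right {k k' : Fin n} (hk : (k' : ℕ) = k + 1) {E S : Finset (Fin n)}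
    (hS : k' ∉ S) (h : ColLE E S) : ColLE E (swapCol k k' S) := by
  intro q
  rcases eq_or_ne q (k + 1) with rfl | hq
  · rw [rank_swapCol_succ hk, if_neg hS, rank_succ]
    exact (h k).trans (Nat.le_add_right _ _)
  · exact (rank_swapCol hk S hq).trans_le (h q)

theorem ColLE.mem_and_rank_eq_of_swapCol_right {k k' : Fin n} (hk : (k' : ℕ) = k + 1)
    {E S : Finset (Fin n)} (hkS : k ∈ S) (hkS' : k' ∉ S) (h : ColLE E (swapCol k k' S))
    (hES : ¬ ColLE E S) :
    k ∉ E ∧ k' ∈ E ∧ rank E k' = rank S k := by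
  have hlt : rank E (k + 1) < rank S (k + 1) := by
    by_contra! hle
    refine hES fun q => ?_
    rcases eq_or_ne q (k + 1) with rfl | hq
    exacts [hle, (rank_swapCol hk S hq).symm.trans_le (h q)]
  have h₀ := h k
  have h₂ := h (k + 2)
  rw [rank_swapCol hk S (by omega)] at h₀ h₂
  rw [rank_succ_succ hk, rank_succ_succ hk] at h₂
  rw [hk]
  rw [rank_succ, rank_succ] at hlt
  rw [rank_succ]
  grind

/-- The factor `x_a + y_{a + c(a) - r(a)}` of the entry `a` of the column `E`, which stands in
the tableau as column number `m`. In 0-based terms the subscript is `a + 1 + m - rank E a`. -/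
noncomputable def colFactor (Y : ℤ → A) (m : ℕ) (E : Finset (Fin n)) (a : Fin n) :
    MvPolynomial (Fin n) A :=
  X a + C (Y (a + 1 + m - rank E a))

/-- The weight of a column: the product of the factors of its entries. -/
noncomputable def colWeight (Y : ℤ → A) (m : ℕ) (E : Finset (Fin n)) : MvPolynomial (Fin n) A :=
  ∏ a ∈ E, colFactor Y m E a

section ColWeight

variable (Y : ℤ → A) (m : ℕ)

theorem rename_swap_colFactor {k k' a : Fin n} (ha : a ≠ k) (ha' : a ≠ k') (E : Finset (Fin n)) :
    rename (Equiv.swap k k') (colFactor Y m E a) = colFactor Y m E a := by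
  simp [colFactor, Equiv.swap_apply_of_ne_of_ne ha ha']

theorem colFactor_swapCol {k k' a : Fin n} (hk : (k' : ℕ) = k + 1) (ha : a ≠ k')
    (E : Finset (Fin n)) : colFactor Y m (swapCol k k' E) a = colFactor Y m E a := by
  rw [colFactor, colFactor, rank_swapCol hk E (hk ▸ Fin.val_ne_of_ne ha)]

theorem rename_swap_prod_erase {k k' : Fin n} {E : Finset (Fin n)} (hk' : k' ∉ E) :
    rename (Equiv.swap k k') (∏ a ∈ E.erase k, colFactor Y m E a) =
      ∏ a ∈ E.erase k, colFactor Y m E a := by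
  rw [map_prod]
  refine prod_congr rfl fun a ha => rename_swap_colFactor Y m (ne_of_mem_erase ha) ?_ E
  rintro rfl
  exact hk' (mem_of_mem_erase ha)

theorem rename_swap_colWeight {k k' : Fin n} (hk : (k' : ℕ) = k + 1) {E : Finset (Fin n)}
    (h : k ∈ E ↔ k' ∈ E) :
    rename (Equiv.swap k k') (colWeight Y m E) = colWeight Y m E := by
  by_cases hkE : k ∈ E
  · have hfactor : colFactor Y m E k' = X k' + C (Y (k + 1 + m - rank E k)) := by
      rw [colFactor, hk, rank_succ, if_pos hkE]
      push_cast
      ring_nf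
    have hne : k' ≠ k := fun h => by omega
    have hk'E : k' ∈ E.erase k := mem_erase.2 ⟨hne, h.1 hkE⟩
    rw [colWeight, ← mul_prod_erase _ _ hkE, ← mul_prod_erase _ _ hk'E, map_mul, map_mul, map_prod,
      prod_congr rfl fun a ha => rename_swap_colFactor Y m
        (ne_of_mem_erase (mem_of_mem_erase ha)) (ne_of_mem_erase ha) E, ← mul_assoc, ← mul_assoc]
    congr 1
    rw [hfactor, colFactor]
    simp only [map_add, rename_X, rename_C, Equiv.swap_apply_left, Equiv.swap_apply_right]
    ring
  · rw [colWeight, map_prod]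
    refine prod_congr rfl fun a ha => rename_swap_colFactor Y m ?_ ?_ E
    · rintro rfl
      exact hkE ha
    · rintro rfl
      exact hkE (h.2 ha)

theorem colWeight_swapCol {k k' : Fin n} (hk : (k' : ℕ) = k + 1) {E : Finset (Fin n)}
    (hkE : k ∈ E) (hkE' : k' ∉ E) :
    colWeight Y m (swapCol k k' E) =
      (X k' + C (Y (k + 2 + m - rank E k))) * ∏ a ∈ E.erase k, colFactor Y m E a := by
  rw [colWeight, ← mul_prod_erase _ _ (right_mem_swapCol.2 hkE), swapCol_erase _ _ _ hkE']
  congr 1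
  · rw [colFactor, hk, rank_swapCol_succ hk, if_neg hkE']
    push_cast
    ring_nf
  · refine prod_congr rfl fun a ha => colFactor_swapCol Y m hk ?_ E
    rintro rfl
    exact hkE' (mem_of_mem_erase ha)

end ColWeight

/-! ### Chains of columns -/

/-- A barred column, encoded by the set of all its entries and the set of its unbarred entries. -/
abbrev BarredCol (n : ℕ) : Type := Finset (Fin n) × Finset (Fin n)

/-- A chain of `m` barred columns such that column `j` has length `ℓ j` and every column may stand
to the left of the next one and of `S`. -/
def IsBarredChain (ℓ : ℕ → ℕ) {m : ℕ} (S : Finset (Fin n)) (P : Fin m → BarredCol n) :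
    Prop :=
  (∀ j, (P j).2 ⊆ (P j).1 ∧ #(P j).1 = ℓ j ∧ ColLE (P j).1 S) ∧
    ∀ i j, i < j → ColLE (P i).1 (P j).1

theorem isBarredChain_snoc {ℓ : ℕ → ℕ} {m : ℕ} {S E U : Finset (Fin n)} {P : Fin m → BarredCol n} :
    IsBarredChain ℓ S (Fin.snoc (α := fun _ => _) P (E, U)) ↔
      ((#E = ℓ m ∧ ColLE E S) ∧ U ⊆ E) ∧ IsBarredChain ℓ E P := by
  simp only [IsBarredChain, Fin.forall_fin_succ', Fin.snoc_castSucc, Fin.snoc_last,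
    Fin.val_castSucc, Fin.val_last, Fin.castSucc_lt_castSucc_iff, Fin.castSucc_lt_last,
    Fin.not_lt.2 (Fin.le_last _)]
  constructor
  · rintro ⟨⟨hP, hU, hE, hES⟩, hlt, -⟩
    exact ⟨⟨⟨hE, hES⟩, hU⟩, fun j => ⟨(hP j).1, (hP j).2.1, (hlt j).2 trivial⟩, fun i => (hlt i).1⟩
  · rintro ⟨⟨⟨hE, hES⟩, hU⟩, hP, hlt⟩
    exact ⟨⟨fun j => ⟨(hP j).1, (hP j).2.1, (hP j).2.2.trans hES⟩, hU, hE, hES⟩,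
      fun i => ⟨hlt i, fun _ => (hP i).2.2⟩, by simp⟩

theorem sum_barredChain_zero {M : Type*} [AddCommMonoid M] (ℓ : ℕ → ℕ) (S : Finset (Fin n))
    (f : (Fin 0 → BarredCol n) → M) :
    ∑ P with IsBarredChain ℓ S P, f P = f Fin.elim0 := by
  rw [sum_filter, Fintype.sum_subsingleton _ Fin.elim0,
    if_pos ⟨fun j => j.elim0, fun j => j.elim0⟩]

theorem sum_barredChain_succ {M : Type*} [AddCommMonoid M] (ℓ : ℕ → ℕ) (m : ℕ)
    (S : Finset (Fin n)) (f : (Fin (m + 1) → BarredCol n) → M) :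
    ∑ P with IsBarredChain ℓ S P, f P =
      ∑ E with #E = ℓ m ∧ ColLE E S, ∑ U ∈ E.powerset,
        ∑ P : Fin m → BarredCol n with IsBarredChain ℓ E P,
          f (Fin.snoc (α := fun _ => _) P (E, U)) := by
  rw [sum_filter, ← (Fin.snocEquiv fun _ => BarredCol n).sum_comp,
    Fintype.sum_prod_type, Fintype.sum_prod_type, sum_filter]
  refine sum_congr rfl fun E _ => ?_
  change (∑ U, ∑ P : Fin m → BarredCol n,
    if IsBarredChain ℓ S (Fin.snoc (α := fun _ => _) P (E, U)) then
      f (Fin.snoc (α := fun _ => _) P (E, U)) else 0) = _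
  simp only [isBarredChain_snoc]
  split_ifs with hE
  · rw [← sum_subset (subset_univ E.powerset) fun U _ hU => ?_]
    · refine sum_congr rfl fun U hU => ?_
      simp [sum_filter, hE, mem_powerset.1 hU]
    · simp [mt mem_powerset.2 hU]
  · simp [hE]

/-- The product of the `y`-parameters of the barred entries `E \ U` of column number `j`. -/
noncomputable def colBarWeight (Y : ℤ → A) (j : ℕ) (E U : Finset (Fin n)) : A :=
  ∏ a ∈ E \ U, Y (a + 1 + j - rank E a)

/-- The content of a column with entries `U`. -/
noncomputable def colContent (U : Finset (Fin n)) (k : Fin n) : ℕ := if k ∈ U then 1 else 0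

/-- The product of the `y`-parameters of all barred entries of a chain. -/
noncomputable def chainBarWeight (Y : ℤ → A) {m : ℕ} (P : Fin m → BarredCol n) : A :=
  ∏ j : Fin m, colBarWeight Y j (P j).1 (P j).2

/-- The unbarred content of a chain. -/
noncomputable def chainContent {m : ℕ} (P : Fin m → BarredCol n) : Fin n → ℕ :=
  ∑ j : Fin m, colContent (P j).2

theorem chainBarWeight_snoc (Y : ℤ → A) {m : ℕ} (P : Fin m → BarredCol n) (E U : Finset (Fin n)) :
    chainBarWeight Y (Fin.snoc (α := fun _ => _) P (E, U)) =
      chainBarWeight Y P * colBarWeight Y m E U := by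
  simp [chainBarWeight, Fin.prod_univ_castSucc]

theorem chainContent_snoc {m : ℕ} (P : Fin m → BarredCol n) (E U : Finset (Fin n)) :
    chainContent (Fin.snoc (α := fun _ => _) P (E, U)) = chainContent P + colContent U := by
  simp [chainContent, Fin.sum_univ_castSucc]

/-- The generating function of the barred chains of `m` columns standing to the left of `S`. -/
noncomputable def colSum (Y : ℤ → A) (ℓ : ℕ → ℕ) (m : ℕ) (S : Finset (Fin n)) :
    MvPolynomial (Fin n) A :=
  ∑ P : Fin m → BarredCol n with IsBarredChain ℓ S P,
    C (chainBarWeight Y P) * xPow A (chainContent P)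

section ColSum

variable (Y : ℤ → A) (ℓ : ℕ → ℕ)

theorem colWeight_eq_sum_powerset (m : ℕ) (E : Finset (Fin n)) :
    colWeight Y m E = ∑ U ∈ E.powerset, C (colBarWeight Y m E U) * xPow A (colContent U) := by
  simp only [colWeight, colFactor, prod_add]
  refine sum_congr rfl fun U _ => ?_
  simp [colBarWeight, xPow, colContent, mul_comm]

theorem colSum_zero (S : Finset (Fin n)) : colSum Y ℓ 0 S = 1 := by
  rw [colSum, sum_barredChain_zero]
  simp [chainBarWeight, chainContent, xPow_zero]

theorem colSum_succ (m : ℕ) (S : Finset (Fin n)) :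
    colSum Y ℓ (m + 1) S =
      ∑ E with #E = ℓ m ∧ ColLE E S, colWeight Y m E * colSum Y ℓ m E := by
  rw [colSum, sum_barredChain_succ]
  refine sum_congr rfl fun E _ => ?_
  simp only [colWeight_eq_sum_powerset, colSum, sum_mul_sum, chainBarWeight_snoc,
    chainContent_snoc, xPow_add, C_mul]
  exact sum_congr rfl fun U _ => sum_congr rfl fun P _ => by ring

/-- The assertion that `colSum` is symmetric in `x_k` and `x_k'` for the bounds `S` in which `k`
does not occur without `k'`. -/
def IsSwapSymmetric (m : ℕ) (k k' : Fin n) : Prop :=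
  ∀ S : Finset (Fin n), (k ∈ S → k' ∈ S) →
    rename (Equiv.swap k k') (colSum Y ℓ m S) = colSum Y ℓ m S

/-- The assertion that, if `k` occurs in `S` without `k'`, replacing it by `k'` changes `colSum`
by a polynomial symmetric in `x_k` and `x_k'` times the factor of an entry `k'`. -/
def HasSymmetricSwapDefect (m : ℕ) (k k' : Fin n) : Prop :=
  ∀ S : Finset (Fin n), k ∈ S → k' ∉ S → ∃ R, rename (Equiv.swap k k') R = R ∧
    colSum Y ℓ m (swapCol k k' S) =
      colSum Y ℓ m S + (X k' + C (Y (k + 1 + m - rank S k))) * R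

variable {Y ℓ} {m : ℕ} {k k' : Fin n}

theorem IsSwapSymmetric.hasSymmetricSwapDefect_succ (hk : (k' : ℕ) = k + 1)
    (hsymm : IsSwapSymmetric Y ℓ m k k') : HasSymmetricSwapDefect Y ℓ (m + 1) k k' := by
  intro S hkS hkS'
  let s : Finset (Finset (Fin n)) := {E | #E = ℓ m ∧ ColLE E (swapCol k k' S) ∧ ¬ ColLE E S}
  have hs {E} (hE : E ∈ s) : k ∉ E ∧ k' ∈ E ∧ rank E k' = rank S k := by
    have hE' := (mem_filter.1 hE).2.2
    exact hE'.1.mem_and_rank_eq_of_swapCol_right hk hkS hkS' hE'.2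
  refine ⟨∑ E ∈ s, (∏ a ∈ E.erase k', colFactor Y m E a) * colSum Y ℓ m E, ?_, ?_⟩
  · rw [map_sum]
    refine sum_congr rfl fun E hE => ?_
    obtain ⟨hkE, -⟩ := hs hE
    rw [map_mul, hsymm E fun h => absurd h hkE, Equiv.swap_comm, rename_swap_prod_erase Y m hkE]
  · rw [colSum_succ, colSum_succ, ← sum_filter_add_sum_filter_not _ fun E => ColLE E S,
      filter_filter, filter_filter, mul_sum]
    congr 1
    · refine sum_congr (filter_congr fun E _ => ?_) fun _ _ => rfl
      exact ⟨fun h => ⟨h.1.1, h.2⟩, fun h => ⟨⟨h.1, h.2.swapCol_right hk hkS'⟩, h.2⟩⟩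
    · refine sum_congr (filter_congr fun E _ => and_assoc) fun E hE => ?_
      obtain ⟨-, hkE', hrank⟩ := hs hE
      rw [colWeight, ← mul_prod_erase _ _ hkE', mul_assoc, colFactor, hrank, hk]
      push_cast
      ring_nf

theorem IsSwapSymmetric.rename_colWeight_mul_colSum (hk : (k' : ℕ) = k + 1)
    (hsymm : IsSwapSymmetric Y ℓ m k k') {E : Finset (Fin n)} (hE : k ∈ E ↔ k' ∈ E) :
    rename (Equiv.swap k k') (colWeight Y m E * colSum Y ℓ m E) =
      colWeight Y m E * colSum Y ℓ m E := by
  rw [map_mul, rename_swap_colWeight Y m hk hE, hsymm E hE.1]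

theorem IsSwapSymmetric.rename_swapCol_pair_of_mem (hk : (k' : ℕ) = k + 1)
    (hsymm : IsSwapSymmetric Y ℓ m k k') (hdefect : HasSymmetricSwapDefect Y ℓ m k k')
    {E : Finset (Fin n)} (hkE : k ∈ E) (hkE' : k' ∉ E) :
    rename (Equiv.swap k k') (colWeight Y m E * colSum Y ℓ m E +
        colWeight Y m (swapCol k k' E) * colSum Y ℓ m (swapCol k k' E)) =
      colWeight Y m E * colSum Y ℓ m E +
        colWeight Y m (swapCol k k' E) * colSum Y ℓ m (swapCol k k' E) := by
  obtain ⟨R, hR, hER⟩ := hdefect E hkE hkE'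
  have hP := hsymm (swapCol k k' E) fun _ => right_mem_swapCol.2 hkE
  have hG := rename_swap_prod_erase Y m (k := k) hkE'
  rw [colWeight_swapCol Y m hk hkE hkE', colWeight, ← mul_prod_erase _ _ hkE,
    eq_sub_of_add_eq hER.symm, colFactor]
  generalize colSum Y ℓ m (swapCol k k' E) = P at hP
  generalize ∏ a ∈ E.erase k, colFactor Y m E a = G at hG
  simp only [map_add, map_sub, map_mul, rename_X, rename_C, Equiv.swap_apply_left,
    Equiv.swap_apply_right, hP, hG, hR]
  ring

theorem IsSwapSymmetric.rename_swapCol_pair (hk : (k' : ℕ) = k + 1)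
    (hsymm : IsSwapSymmetric Y ℓ m k k') (hdefect : HasSymmetricSwapDefect Y ℓ m k k')
    (E : Finset (Fin n)) :
    rename (Equiv.swap k k') (colWeight Y m E * colSum Y ℓ m E +
        colWeight Y m (swapCol k k' E) * colSum Y ℓ m (swapCol k k' E)) =
      colWeight Y m E * colSum Y ℓ m E +
        colWeight Y m (swapCol k k' E) * colSum Y ℓ m (swapCol k k' E) := by
  by_cases hE : k ∈ E ↔ k' ∈ E
  · rw [swapCol_eq_self hE, map_add, hsymm.rename_colWeight_mul_colSum hk hE]
  by_cases hkE : k ∈ E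
  · exact hsymm.rename_swapCol_pair_of_mem hk hdefect hkE (by tauto)
  · have h := hsymm.rename_swapCol_pair_of_mem hk hdefect (E := swapCol k k' E)
      (left_mem_swapCol.2 (by tauto)) (mt right_mem_swapCol.1 hkE)
    rwa [swapCol_swapCol, add_comm] at h

theorem IsSwapSymmetric.succ (hk : (k' : ℕ) = k + 1) (hsymm : IsSwapSymmetric Y ℓ m k k')
    (hdefect : HasSymmetricSwapDefect Y ℓ m k k') : IsSwapSymmetric Y ℓ (m + 1) k k' := by
  intro S hS
  rw [← sub_eq_zero, colSum_succ, map_sum, ← sum_sub_distrib]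
  refine sum_involution (fun E _ => swapCol k k' E) (fun E _ => ?_) (fun E _ hne heq => ?_)
    (fun E hE => ?_) (fun E _ => swapCol_swapCol k k' E)
  · rw [sub_add_sub_comm, ← map_add, hsymm.rename_swapCol_pair hk hdefect, sub_self]
  · refine hne (sub_eq_zero.2 (hsymm.rename_colWeight_mul_colSum hk ?_))
    rw [← right_mem_swapCol (k := k), heq]
  · obtain ⟨-, hcard, hE⟩ := mem_filter.1 hE
    exact mem_filter.2 ⟨mem_univ _, (card_swapCol k k' E).trans hcard, hE.swapCol_left hk hS⟩

variable (Y ℓ m) in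
theorem isSwapSymmetric_and_hasSymmetricSwapDefect (hk : (k' : ℕ) = k + 1) :
    IsSwapSymmetric Y ℓ m k k' ∧ HasSymmetricSwapDefect Y ℓ m k k' := by
  induction m with
  | zero => exact ⟨fun S _ => by simp [colSum_zero], fun S _ _ => ⟨0, by simp [colSum_zero]⟩⟩
  | succ m ih => exact ⟨ih.1.succ hk ih.2, ih.1.hasSymmetricSwapDefect_succ hk⟩

variable (Y ℓ m) in
theorem isSymmetric_colSum_empty : (colSum Y ℓ m (∅ : Finset (Fin n))).IsSymmetric :=
  isSymmetric_of_rename_swap fun _ _ hk =>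
    (isSwapSymmetric_and_hasSymmetricSwapDefect Y ℓ m hk).1 ∅ (by simp)

end ColSum

/-! ### Yamanouchi words -/

/-- The content of a word, restricted to the letters less than `n`. -/
def wordContent (w : List ℕ) (k : Fin n) : ℕ := w.count (k : ℕ)

theorem wordContent_append (w w' : List ℕ) :
    (wordContent (w ++ w') : Fin n → ℕ) = wordContent w + wordContent w' :=
  funext fun _ => List.count_append

/-- The words all of whose initial segments, read after a word of content `ν`, keep the content
weakly decreasing. The Yamanouchi words are those with `ν = 0`. -/
def YamFrom (ν : Fin n → ℕ) (w : List ℕ) : Prop := ∀ t, Antitone (ν + wordContent (w.take t))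

theorem YamFrom.antitone {ν : Fin n → ℕ} {w : List ℕ} (h : YamFrom ν w) :
    Antitone (ν + wordContent w) := by
  simpa using h w.length

theorem yamFrom_nil {ν : Fin n → ℕ} : YamFrom ν [] ↔ Antitone ν := by
  have h : (wordContent [] : Fin n → ℕ) = 0 := funext fun _ => List.count_nil
  simp [YamFrom, h]

theorem yamFrom_append {ν : Fin n → ℕ} {w w' : List ℕ} :
    YamFrom ν (w ++ w') ↔ YamFrom ν w ∧ YamFrom (ν + wordContent w) w' := by
  constructor
  · refine fun h => ⟨fun t => ?_, fun t => ?_⟩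
    · have ht := h (min t w.length)
      rwa [List.take_append_of_le_length (min_le_right _ _), ← List.take_eq_take_min] at ht
    · have ht := h (w.length + t)
      rwa [List.take_length_add_append, wordContent_append, ← add_assoc] at ht
  · rintro ⟨h, h'⟩ t
    rcases le_total t w.length with ht | ht
    · rw [List.take_append_of_le_length ht]
      exact h t
    · obtain ⟨s, rfl⟩ := Nat.exists_eq_add_of_le ht
      rw [List.take_length_add_append, wordContent_append, ← add_assoc]
      exact h' s

theorem yamFrom_iff_antitone_of_pairwise_lt {ν : Fin n → ℕ} (hν : Antitone ν) {w : List ℕ}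
    (hw : w.Pairwise (· < ·)) : YamFrom ν w ↔ Antitone (ν + wordContent w) := by
  refine ⟨YamFrom.antitone, fun h t => antitone_of_succ_le fun k k' hk => ?_⟩
  have hkk' : k ≤ k' := Fin.le_def.2 (by omega)
  have hνk := hν hkk'
  have hwk := h hkk'
  simp only [Pi.add_apply, wordContent] at hwk ⊢
  rcases Nat.eq_zero_or_pos ((w.take t).count (k' : ℕ)) with h0 | hpos
  · omega
  · rw [← List.take_append_drop t w, List.pairwise_append] at hw
    have hdrop : (w.drop t).count (k : ℕ) = 0 := List.count_eq_zero.2 fun hmem => by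
      have := hw.2.2 _ (List.count_pos_iff.1 hpos) _ hmem
      omega
    have hsplit (a : ℕ) : w.count a = (w.take t).count a + (w.drop t).count a := by
      rw [← List.count_append, List.take_append_drop]
    rw [hsplit, hsplit] at hwk
    omega

/-- The entries of a column, read from top to bottom. -/
def colLetters (U : Finset (Fin n)) : List ℕ := (U.sort (· ≤ ·)).map Fin.val

theorem pairwise_lt_colLetters (U : Finset (Fin n)) : (colLetters U).Pairwise (· < ·) :=
  List.pairwise_map.2 (U.sortedLT_sort).pairwise

theorem wordContent_colLetters (U : Finset (Fin n)) :
    wordContent (colLetters U) = colContent U := by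
  funext k
  rw [wordContent, colLetters, List.count_map_of_injective _ _ Fin.val_injective,
    (U.sort_nodup _).count, colContent]
  simp

/-- The word of the unbarred entries of a chain, read down each column from the rightmost column
to the leftmost. -/
def chainWord {m : ℕ} (P : Fin m → BarredCol n) : List ℕ :=
  (List.finRange m).reverse.flatMap fun j => colLetters (P j).2

theorem chainWord_snoc {m : ℕ} (P : Fin m → BarredCol n) (E U : Finset (Fin n)) :
    chainWord (Fin.snoc (α := fun _ => _) P (E, U)) = colLetters U ++ chainWord P := by
  simp [chainWord, List.finRange_succ_last, List.flatMap_map, ← List.map_reverse]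

theorem wordContent_chainWord {m : ℕ} (P : Fin m → BarredCol n) :
    wordContent (chainWord P) = chainContent P := by
  induction m with
  | zero => exact funext fun _ => by simp [chainWord, wordContent, chainContent]
  | succ m ih =>
    rw [← Fin.snoc_init_self P, ← Prod.mk.eta (p := P (Fin.last m)), chainWord_snoc,
      chainContent_snoc, wordContent_append, wordContent_colLetters, ih, add_comm]

/-! ### Yamanouchi expansion of alternants -/

section Expansion

variable (Y : ℤ → A) (ℓ : ℕ → ℕ)

theorem antisymmetrize_C_mul (a : A) (p : MvPolynomial (Fin n) A) :
    antisymmetrize (C a * p) = C a * antisymmetrize p := by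
  rw [← smul_eq_C_mul, map_smul, smul_eq_C_mul]

/-- If adding the column `U` to `ν` breaks monotonicity at `k, k + 1`, then the exponents of
`x_k` and `x_(k+1)` agree, and the alternant vanishes. -/
theorem antisymmetrize_eq_zero_of_not_antitone {ν : Fin n → ℕ} (hν : Antitone ν) (m : ℕ)
    {E U : Finset (Fin n)} (hUE : U ⊆ E) (h : ¬ Antitone (ν + colContent U)) :
    antisymmetrize (xPow A (ν + colContent U + rhoPart n) * colSum Y ℓ m E) = 0 := by
  obtain ⟨k, k', hk, hlt⟩ : ∃ k k' : Fin n, (k' : ℕ) = k + 1 ∧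
      (ν + colContent U) k < (ν + colContent U) k' := by
    by_contra! hle
    exact h (antitone_of_succ_le hle)
  have hνk : ν k' ≤ ν k := hν (Fin.le_def.2 (by omega))
  simp only [Pi.add_apply, colContent] at hlt
  have hkU' : k' ∈ U := by grind
  have hexp : (ν + colContent U + rhoPart n) k = (ν + colContent U + rhoPart n) k' := by
    simp only [Pi.add_apply, colContent, rhoPart]
    grind
  refine antisymmetrize_eq_zero (k := k) (k' := k') (fun h => by omega) ?_
  rw [map_mul, rename_swap_xPow hexp,
    (isSwapSymmetric_and_hasSymmetricSwapDefect Y ℓ m hk).1 E fun _ => hUE hkU']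

theorem antisymmetrize_xPow_mul_colSum_succ {ν : Fin n → ℕ} (hν : Antitone ν) (m : ℕ)
    (S : Finset (Fin n)) :
    antisymmetrize (xPow A (ν + rhoPart n) * colSum Y ℓ (m + 1) S) =
      ∑ E with #E = ℓ m ∧ ColLE E S, ∑ U ∈ E.powerset with Antitone (ν + colContent U),
        C (colBarWeight Y m E U) *
          antisymmetrize (xPow A (ν + colContent U + rhoPart n) * colSum Y ℓ m E) := by
  rw [colSum_succ, mul_sum, map_sum]
  refine sum_congr rfl fun E _ => ?_
  rw [colWeight_eq_sum_powerset, sum_mul, mul_sum, map_sum, sum_filter_of_ne]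
  · refine sum_congr rfl fun U _ => ?_
    rw [← antisymmetrize_C_mul, add_right_comm, xPow_add _ (colContent U)]
    congr 1
    ring
  · intro U hU hne
    by_contra h
    exact hne (by rw [antisymmetrize_eq_zero_of_not_antitone Y ℓ hν m (mem_powerset.1 hU) h,
      mul_zero])

theorem antisymmetrize_xPow_mul_colSum {ν : Fin n → ℕ} (hν : Antitone ν) (m : ℕ)
    (S : Finset (Fin n)) :
    antisymmetrize (xPow A (ν + rhoPart n) * colSum Y ℓ m S) =
      ∑ P : Fin m → BarredCol n with IsBarredChain ℓ S P ∧ YamFrom ν (chainWord P),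
        C (chainBarWeight Y P) * antisymmetrize (xPow A (ν + chainContent P + rhoPart n)) := by
  rw [← filter_filter, sum_filter]
  induction m generalizing ν S with
  | zero =>
    rw [sum_barredChain_zero, if_pos (by simpa [chainWord] using yamFrom_nil.2 hν)]
    simp [colSum_zero, chainBarWeight, chainContent]
  | succ m ih =>
    rw [antisymmetrize_xPow_mul_colSum_succ Y ℓ hν, sum_barredChain_succ]
    refine sum_congr rfl fun E _ => ?_
    rw [sum_filter]
    refine sum_congr rfl fun U _ => ?_
    simp only [chainWord_snoc, yamFrom_append, wordContent_colLetters, chainBarWeight_snoc,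
      chainContent_snoc, yamFrom_iff_antitone_of_pairwise_lt hν (pairwise_lt_colLetters U)]
    split_ifs with hU
    · rw [ih hU, mul_sum]
      refine sum_congr rfl fun P _ => ?_
      simp only [hU, true_and, mul_ite, mul_zero, C_mul]
      rw [← add_assoc, add_right_comm ν, ← mul_assoc, mul_comm (C _) (C _)]
    · simp [hU]

end Expansion

/-! ### The bialternant formula -/

/-- The rows `i` of the diagram of `lam` that reach column `j`. -/
noncomputable def colRows (lam : Fin n → ℕ) (j : ℕ) : Finset (Fin n) := {i | j < lam i}

theorem mem_colRows {lam : Fin n → ℕ} {j : ℕ} {i : Fin n} : i ∈ colRows lam j ↔ j < lam i := by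
  simp [colRows]

/-- The length of column `j` of the diagram of `lam`, i.e. the conjugate partition. -/
noncomputable def colLength (lam : Fin n → ℕ) (j : ℕ) : ℕ := #(colRows lam j)

theorem colRows_sup (lam : Fin n → ℕ) : colRows lam (univ.sup lam) = ∅ :=
  filter_eq_empty_iff.2 fun i _ => (le_sup (f := lam) (mem_univ i)).not_gt

theorem colRows_succ_subset (lam : Fin n → ℕ) (j : ℕ) : colRows lam (j + 1) ⊆ colRows lam j :=
  fun _ hi => mem_colRows.2 ((Nat.lt_succ_self j).trans (mem_colRows.1 hi))

theorem isLowerSet_colRows {lam : Fin n → ℕ} (hlam : Antitone lam) (j : ℕ) :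
    IsLowerSet (colRows lam j : Set (Fin n)) :=
  fun _ _ hba ha => mem_colRows.2 ((mem_colRows.1 ha).trans_le (hlam hba))

theorem ColLE.of_subset {S E : Finset (Fin n)} (h : S ⊆ E) : ColLE E S :=
  fun _ => card_le_card (filter_subset_filter _ h)

theorem ColLE.subset_of_isLowerSet {E S : Finset (Fin n)} (h : ColLE E S)
    (hS : IsLowerSet (S : Set (Fin n))) : S ⊆ E := by
  intro a ha
  have hSa : {b ∈ S | b.val < a.val + 1} = Iic a := by
    ext b
    simp only [mem_filter, mem_Iic, Nat.lt_succ_iff, Fin.val_fin_le]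
    exact ⟨And.right, fun hb => ⟨hS hb ha, hb⟩⟩
  have hEa : {b ∈ E | b.val < a.val + 1} ⊆ Iic a := fun b hb =>
    mem_Iic.2 (Nat.lt_succ_iff.1 (mem_filter.1 hb).2)
  have hcard := h (a + 1)
  rw [rank, hSa] at hcard
  exact (mem_filter.1 (eq_of_subset_of_card_le hEa hcard ▸ mem_Iic.2 le_rfl)).1

theorem eq_colRows_of_antitone {lam : Fin n → ℕ} (hlam : Antitone lam) {m : ℕ} {E : Finset (Fin n)}
    (hcard : #E = colLength lam m) (hE : ColLE E (colRows lam (m + 1)))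
    (hanti : Antitone ((fun i => lam i - (m + 1)) + colContent E)) : E = colRows lam m := by
  have hsub := hE.subset_of_isLowerSet (isLowerSet_colRows hlam _)
  have hlower : IsLowerSet (E : Set (Fin n)) := by
    intro a b hba ha
    by_cases hb : b ∈ colRows lam (m + 1)
    · exact hsub hb
    · have hab := hanti hba
      simp only [Pi.add_apply, colContent, if_pos (mem_coe.1 ha)] at hab
      rw [mem_colRows] at hb
      by_contra hbE
      rw [mem_coe] at hbE
      rw [if_neg hbE] at hab
      omega
  rcases hlower.total (isLowerSet_colRows hlam m) with h | h
  · exact eq_of_subset_of_card_le (coe_subset.1 h) hcard.ge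
  · exact (eq_of_subset_of_card_le (coe_subset.1 h) hcard.le).symm

theorem colBarWeight_self (Y : ℤ → A) (j : ℕ) (E : Finset (Fin n)) : colBarWeight Y j E E = 1 := by
  simp [colBarWeight]

theorem colBarWeight_zero_of_ne {j : ℕ} {E U : Finset (Fin n)} (hUE : U ⊆ E) (h : U ≠ E) :
    colBarWeight (0 : ℤ → A) j E U = 0 := by
  obtain ⟨a, ha⟩ := sdiff_nonempty.2 fun hEU => h (hUE.antisymm hEU)
  exact prod_eq_zero ha rfl

theorem sub_succ_add_colContent (lam : Fin n → ℕ) (m : ℕ) :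
    (fun i => lam i - (m + 1)) + colContent (colRows lam m) = fun i => lam i - m := by
  funext i
  simp only [Pi.add_apply, colContent, mem_colRows]
  split_ifs <;> omega

theorem antisymmetrize_xPow_mul_colSum_zero_succ {lam : Fin n → ℕ} (hlam : Antitone lam) (m : ℕ) :
    antisymmetrize (xPow A ((fun i => lam i - (m + 1)) + rhoPart n) *
        colSum 0 (colLength lam) (m + 1) (colRows lam (m + 1))) =
      antisymmetrize (xPow A ((fun i => lam i - m) + rhoPart n) *
        colSum 0 (colLength lam) m (colRows lam m)) := by
  have hsub (j : ℕ) : Antitone fun i => lam i - j := fun _ _ h => Nat.sub_le_sub_right (hlam h) j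
  have hmem : colRows lam m ∈ ({E | #E = colLength lam m ∧ ColLE E (colRows lam (m + 1))} :
      Finset (Finset (Fin n))) :=
    mem_filter.2 ⟨mem_univ _, rfl, .of_subset (colRows_succ_subset lam m)⟩
  rw [antisymmetrize_xPow_mul_colSum_succ _ _ (hsub _), sum_eq_single_of_mem _ hmem,
    sum_eq_single_of_mem (colRows lam m)]
  · rw [colBarWeight_self, C_1, one_mul, sub_succ_add_colContent]
  · rw [mem_filter, sub_succ_add_colContent]
    exact ⟨mem_powerset_self _, hsub m⟩
  · intro U hU hne
    rw [colBarWeight_zero_of_ne (mem_powerset.1 (mem_filter.1 hU).1) hne, C_0, zero_mul]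
  · intro E hE hne
    refine sum_eq_zero fun U hU => ?_
    obtain ⟨hUE, hanti⟩ := mem_filter.1 hU
    rw [colBarWeight_zero_of_ne (mem_powerset.1 hUE), C_0, zero_mul]
    rintro rfl
    exact hne (eq_colRows_of_antitone hlam (mem_filter.1 hE).2.1 (mem_filter.1 hE).2.2 hanti)

theorem antisymmetrize_xPow_mul_colSum_zero {lam : Fin n → ℕ} (hlam : Antitone lam) :
    antisymmetrize (xPow A (rhoPart n) * colSum 0 (colLength lam) (univ.sup lam) ∅) =
      antisymmetrize (xPow A (lam + rhoPart n)) := by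
  have h (m : ℕ) : antisymmetrize (xPow A ((fun i => lam i - m) + rhoPart n) *
      colSum 0 (colLength lam) m (colRows lam m)) =
        antisymmetrize (xPow A (lam + rhoPart n)) := by
    induction m with
    | zero => simp [colSum_zero]
    | succ m ih => rw [antisymmetrize_xPow_mul_colSum_zero_succ hlam, ih]
  have hsup : (fun i => lam i - univ.sup lam) = 0 :=
    funext fun i => Nat.sub_eq_zero_of_le (le_sup (f := lam) (mem_univ i))
  rw [← h (univ.sup lam), colRows_sup, hsup, zero_add]

/-! ### Tableaux as chains of columns -/

section Rank

variable {E : Finset (Fin n)}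

theorem rank_mono (E : Finset (Fin n)) : Monotone (rank E) :=
  fun _ _ h => card_le_card (monotone_filter_right E fun _ _ ha => ha.trans_le h)

theorem rank_succ_of_mem {a : Fin n} (ha : a ∈ E) : rank E (a + 1) = rank E a + 1 := by
  rw [rank_succ, if_pos ha]

theorem rank_strictMonoOn (E : Finset (Fin n)) : StrictMonoOn (fun a : Fin n => rank E a) E :=
  fun _ ha _ _ hab => Nat.lt_of_succ_le ((rank_succ_of_mem ha).symm.trans_le (rank_mono E hab))

theorem rank_lt_card {a : Fin n} (ha : a ∈ E) : rank E a < #E :=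
  card_lt_card (filter_ssubset.2 ⟨a, ha, lt_irrefl _⟩)

theorem exists_mem_rank_eq {i : ℕ} (hi : i < #E) : ∃ a ∈ E, rank E a = i := by
  have himage : E.image (fun a : Fin n => rank E a) = range #E :=
    eq_of_subset_of_card_le (image_subset_iff.2 fun a ha => mem_range.2 (rank_lt_card ha))
      (by rw [card_range, card_image_of_injOn (rank_strictMonoOn E).injOn])
  exact mem_image.1 (himage ▸ mem_range.2 hi)

theorem mem_iff_lt_card_of_isLowerSet (hE : IsLowerSet (E : Set (Fin n))) {i : Fin n} :
    i ∈ E ↔ (i : ℕ) < #E := by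
  constructor
  · intro hi
    rw [← Nat.succ_le_iff, Nat.succ_eq_add_one, ← Fin.card_Iic]
    exact card_le_card fun a ha => hE (mem_Iic.1 ha) hi
  · contrapose!
    intro hi
    rw [← Fin.card_Iio]
    exact card_le_card fun a ha => mem_Iio.2 (not_le.1 fun hia => hi (hE hia ha))

theorem ColLE.le_of_rank_eq {D : Finset (Fin n)} (h : ColLE D E) {a b : Fin n}
    (hb : b ∈ E) (hab : rank D a = rank E b) : a ≤ b := by
  by_contra! hlt
  have hle : rank D (b + 1) ≤ rank D a := rank_mono D hlt
  have := h (b + 1)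
  rw [rank_succ_of_mem hb] at this
  omega

end Rank

theorem mem_cells {lam : Fin n → ℕ} {c : Fin n × ℕ} : c ∈ cells lam ↔ c.2 < lam c.1 := by
  simp only [cells, mem_filter, mem_product, mem_univ, true_and, mem_range, and_iff_right_iff_imp]
  exact fun h => h.trans_le (le_sup (f := lam) (mem_univ c.1))

section Tableau

variable {lam : Fin n → ℕ}

/-- The column number of a cell. -/
noncomputable def cellCol (c : cells lam) : Fin (univ.sup lam) :=
  ⟨c.1.2, (mem_cells.1 c.2).trans_le (le_sup (f := lam) (mem_univ c.1.1))⟩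

/-- The entries of column `j` of a barred tableau, regardless of bars. -/
noncomputable def entries (T : cells lam → Fin n × Bool) (j : ℕ) : Finset (Fin n) :=
  {a | ∃ c, c.1.2 = j ∧ (T c).1 = a}

/-- The unbarred entries of column `j` of a barred tableau. -/
noncomputable def unbarredEntries (T : cells lam → Fin n × Bool) (j : ℕ) : Finset (Fin n) :=
  {a | ∃ c, c.1.2 = j ∧ T c = (a, false)}

/-- The columns of a barred tableau, as a chain. -/
noncomputable def columns (T : cells lam → Fin n × Bool) (j : Fin (univ.sup lam)) : BarredCol n :=
  (entries T j, unbarredEntries T j)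

variable {T : cells lam → Fin n × Bool}

theorem mem_entries {j : ℕ} {a : Fin n} :
    a ∈ entries T j ↔ ∃ c, c.1.2 = j ∧ (T c).1 = a := by
  simp [entries]

theorem mem_unbarredEntries {j : ℕ} {a : Fin n} :
    a ∈ unbarredEntries T j ↔ ∃ c, c.1.2 = j ∧ T c = (a, false) := by
  simp [unbarredEntries]

theorem fst_mem_entries (c : cells lam) : (T c).1 ∈ entries T c.1.2 :=
  mem_entries.2 ⟨c, rfl, rfl⟩

theorem unbarredEntries_subset_entries (T : cells lam → Fin n × Bool) (j : ℕ) :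
    unbarredEntries T j ⊆ entries T j := by
  intro a ha
  obtain ⟨c, hc, hca⟩ := mem_unbarredEntries.1 ha
  exact mem_entries.2 ⟨c, hc, congrArg Prod.fst hca⟩

theorem fst_lt_fst_iff (hT : IsBarred lam T) {c d : cells lam} (h : c.1.2 = d.1.2) :
    (T c).1 < (T d).1 ↔ c.1.1 < d.1.1 := by
  refine ⟨fun hlt => ?_, hT.2 c d h⟩
  by_contra! hle
  rcases hle.eq_or_lt with heq | hgt
  · exact hlt.ne (by rw [Subtype.ext (Prod.ext heq h.symm : d.1 = c.1)])
  · exact hlt.not_gt (hT.2 d c h.symm hgt)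

theorem eq_of_fst_eq (hT : IsBarred lam T) {c d : cells lam} (h : c.1.2 = d.1.2)
    (hcd : (T c).1 = (T d).1) : c = d := by
  refine Subtype.ext (Prod.ext (le_antisymm ?_ ?_) h)
  · exact not_lt.1 fun hlt => hcd.not_gt (hT.2 d c h.symm hlt)
  · exact not_lt.1 fun hlt => hcd.not_lt (hT.2 c d h hlt)

theorem fst_mem_unbarredEntries_iff (hT : IsBarred lam T) (c : cells lam) :
    (T c).1 ∈ unbarredEntries T c.1.2 ↔ (T c).2 = false := by
  rw [mem_unbarredEntries]
  constructor
  · rintro ⟨d, hdc, hd⟩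
    rw [← eq_of_fst_eq hT hdc (by rw [hd]), hd]
  · exact fun hc => ⟨c, rfl, Prod.ext rfl hc⟩

theorem rank_entries (hT : IsBarred lam T) (j q : ℕ) :
    rank (entries T j) q =
      #{i : Fin n | ∃ h : (i, j) ∈ cells lam, (T ⟨(i, j), h⟩).1.val < q} := by
  rw [rank]
  symm
  refine card_bij (fun i hi => (T ⟨(i, j), (mem_filter.1 hi).2.fst⟩).1) (fun i hi => ?_)
    (fun i hi i' hi' heq => ?_) fun a ha => ?_
  · obtain ⟨hc, hq⟩ := (mem_filter.1 hi).2
    exact mem_filter.2 ⟨mem_entries.2 ⟨⟨(i, j), hc⟩, rfl, rfl⟩, hq⟩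
  · have h := eq_of_fst_eq hT (c := ⟨(i, j), _⟩) (d := ⟨(i', j), _⟩) rfl heq
    exact congrArg (fun c : cells lam => c.1.1) h
  · obtain ⟨ha, haq⟩ := mem_filter.1 ha
    obtain ⟨⟨⟨i, _⟩, hc⟩, rfl, rfl⟩ := mem_entries.1 ha
    exact ⟨i, mem_filter.2 ⟨mem_univ _, hc, haq⟩, rfl⟩

theorem card_entries (hT : IsBarred lam T) (j : ℕ) : #(entries T j) = colLength lam j := by
  have hrank : rank (entries T j) n = #(entries T j) := by
    rw [rank, filter_true_of_mem fun a _ => a.2]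
  rw [← hrank, rank_entries hT, colLength, colRows]
  congr 1
  exact filter_congr fun i _ => ⟨fun h => mem_cells.1 h.1, fun h => ⟨mem_cells.2 h, Fin.is_lt _⟩⟩

theorem rank_entries_fst (hlam : Antitone lam) (hT : IsBarred lam T) (c : cells lam) :
    rank (entries T c.1.2) (T c).1 = c.1.1 := by
  rw [rank_entries hT]
  refine (congrArg card ?_).trans (Fin.card_Iio c.1.1)
  ext i
  simp only [mem_filter, mem_univ, true_and, mem_Iio, Fin.val_fin_lt]
  constructor
  · rintro ⟨h, hlt⟩
    exact (fst_lt_fst_iff hT (c := ⟨_, h⟩) (d := c) rfl).1 hlt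
  · intro hi
    have h : (i, c.1.2) ∈ cells lam := mem_cells.2 ((mem_cells.1 c.2).trans_le (hlam hi.le))
    exact ⟨h, (fst_lt_fst_iff hT (c := ⟨_, h⟩) (d := c) rfl).2 hi⟩

theorem colLE_entries (hT : IsBarred lam T) {j j' : ℕ} (hj : j ≤ j') :
    ColLE (entries T j) (entries T j') := by
  intro q
  rw [rank_entries hT, rank_entries hT]
  refine card_le_card (monotone_filter_right _ fun i _ => ?_)
  rintro ⟨h, hq⟩
  have h' : (i, j) ∈ cells lam := mem_cells.2 (hj.trans_lt (mem_cells.1 h))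
  exact ⟨h', (Fin.le_def.1 (hT.1 ⟨_, h'⟩ ⟨_, h⟩ rfl hj)).trans_lt hq⟩

theorem isBarredChain_columns (hT : IsBarred lam T) :
    IsBarredChain (colLength lam) ∅ (columns T) :=
  ⟨fun _ => ⟨unbarredEntries_subset_entries T _, card_entries hT _, colLE_empty _⟩,
    fun _ _ hij => colLE_entries hT hij.le⟩

theorem columns_injOn (hlam : Antitone lam) :
    Set.InjOn columns {T : cells lam → Fin n × Bool | IsBarred lam T} := by
  intro T hT T' hT' h
  funext c
  have hE : entries T c.1.2 = entries T' c.1.2 := congrArg Prod.fst (congrFun h (cellCol c))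
  have hU : unbarredEntries T c.1.2 = unbarredEntries T' c.1.2 :=
    congrArg Prod.snd (congrFun h (cellCol c))
  have hfst : (T c).1 = (T' c).1 := by
    refine (rank_strictMonoOn _).injOn (fst_mem_entries c) (hE ▸ fst_mem_entries c) ?_
    rw [rank_entries_fst hlam hT, hE, rank_entries_fst hlam hT']
  have hsnd : (T c).2 = false ↔ (T' c).2 = false := by
    rw [← fst_mem_unbarredEntries_iff hT, ← fst_mem_unbarredEntries_iff hT', hU, hfst]
  exact Prod.ext hfst (by simpa using hsnd)

theorem mem_cells_iff_lt_colLength (hlam : Antitone lam) {i : Fin n} {j : ℕ} :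
    (i, j) ∈ cells lam ↔ (i : ℕ) < colLength lam j := by
  rw [mem_cells, ← mem_colRows, mem_iff_lt_card_of_isLowerSet (isLowerSet_colRows hlam j),
    colLength]

theorem exists_entry_rank_eq (hlam : Antitone lam) {P : Fin (univ.sup lam) → BarredCol n}
    (hP : IsBarredChain (colLength lam) ∅ P) :
    ∃ a : cells lam → Fin n,
      (∀ c, a c ∈ (P (cellCol c)).1 ∧ rank (P (cellCol c)).1 (a c) = c.1.1) ∧
      ∀ j, ∀ b ∈ (P j).1, ∃ c, cellCol c = j ∧ a c = b := by
  have hex (c : cells lam) : ∃ a ∈ (P (cellCol c)).1, rank (P (cellCol c)).1 a = c.1.1 :=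
    exists_mem_rank_eq (by rw [(hP.1 _).2.1]; exact (mem_cells_iff_lt_colLength hlam).1 c.2)
  choose a ha hrank using hex
  refine ⟨a, fun c => ⟨ha c, hrank c⟩, fun j b hb => ?_⟩
  have hlt : rank (P j).1 b < colLength lam j := (hP.1 j).2.1 ▸ rank_lt_card hb
  have hi : rank (P j).1 b < n := hlt.trans_le ((card_le_univ _).trans_eq (Fintype.card_fin n))
  let c : cells lam := ⟨(⟨_, hi⟩, j), (mem_cells_iff_lt_colLength hlam).2 hlt⟩
  exact ⟨c, rfl, (rank_strictMonoOn _).injOn (ha c) hb (hrank c)⟩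

theorem exists_isBarred_columns_eq (hlam : Antitone lam) {P : Fin (univ.sup lam) → BarredCol n}
    (hP : IsBarredChain (colLength lam) ∅ P) :
    ∃ T : cells lam → Fin n × Bool, IsBarred lam T ∧ columns T = P := by
  obtain ⟨a, ha, hsurj⟩ := exists_entry_rank_eq hlam hP
  refine ⟨fun c => (a c, decide (a c ∉ (P (cellCol c)).2)), ⟨fun c d h hle => ?_,
    fun c d h hlt => ?_⟩, funext fun j => Prod.ext ?_ ?_⟩
  · rcases hle.eq_or_lt with heq | hlt
    · rw [Subtype.ext (Prod.ext h heq : c.1 = d.1)]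
    · exact (hP.2 (cellCol c) (cellCol d) hlt).le_of_rank_eq (ha d).1
        (by rw [(ha c).2, (ha d).2, h])
  · have hcol : cellCol c = cellCol d := Fin.ext h
    refine ((rank_strictMonoOn (P (cellCol d)).1).lt_iff_lt (hcol ▸ (ha c).1) (ha d).1).1 ?_
    change rank _ (a c) < rank _ (a d)
    rw [(ha d).2, ← hcol, (ha c).2]
    exact hlt
  · ext b
    refine mem_entries.trans ⟨?_, fun hb => ?_⟩
    · rintro ⟨c, hc, rfl⟩
      exact (Fin.ext hc : cellCol c = j) ▸ (ha c).1
    · obtain ⟨c, hc, hcb⟩ := hsurj j b hb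
      exact ⟨c, congrArg Fin.val hc, hcb⟩
  · ext b
    refine mem_unbarredEntries.trans ⟨?_, fun hb => ?_⟩
    · rintro ⟨c, hc, hcb⟩
      obtain rfl : cellCol c = j := Fin.ext hc
      simp only [Prod.mk.injEq, decide_eq_false_iff_not, not_not] at hcb
      exact hcb.1 ▸ hcb.2
    · obtain ⟨c, rfl, rfl⟩ := hsurj j b ((hP.1 j).1 hb)
      exact ⟨c, rfl, by simpa using hb⟩

theorem sum_isBarred {M : Type*} [AddCommMonoid M] (hlam : Antitone lam)
    (p : (Fin (univ.sup lam) → BarredCol n) → Prop) (f : (Fin (univ.sup lam) → BarredCol n) → M) :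
    ∑ T with IsBarred lam T ∧ p (columns T), f (columns T) =
      ∑ P with IsBarredChain (colLength lam) ∅ P ∧ p P, f P := by
  refine sum_nbij columns (fun T hT => ?_) ?_ ?_ fun _ _ => rfl
  · obtain ⟨hT, hp⟩ := (mem_filter.1 hT).2
    exact mem_filter.2 ⟨mem_univ _, isBarredChain_columns hT, hp⟩
  · exact (columns_injOn hlam).mono fun T hT => (mem_filter.1 hT).2.1
  · intro P hP
    obtain ⟨hP, hp⟩ := (mem_filter.1 hP).2
    obtain ⟨T, hT, rfl⟩ := exists_isBarred_columns_eq hlam hP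
    exact ⟨T, mem_filter.2 ⟨mem_univ _, hT, hp⟩, rfl⟩

end Tableau

/-! ### Factorial Schur polynomials -/

section Statistics

variable {lam : Fin n → ℕ} {T : cells lam → Fin n × Bool}

/-- The product of the `y`-parameters of the barred entries, i.e. `c_T(y)` for one diagram. -/
noncomputable def barWeight (Y : ℤ → A) (lam : Fin n → ℕ) (T : cells lam → Fin n × Bool) : A :=
  ∏ c with (T c).2 = true, Y (ysub (T c).1 c.1)

theorem mem_sdiff_unbarredEntries_iff (hT : IsBarred lam T) (c : cells lam) :
    (T c).1 ∈ entries T c.1.2 \ unbarredEntries T c.1.2 ↔ (T c).2 = true := by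
  rw [mem_sdiff, fst_mem_unbarredEntries_iff hT]
  simp [fst_mem_entries]

theorem chainBarWeight_columns (Y : ℤ → A) (hlam : Antitone lam) (hT : IsBarred lam T) :
    chainBarWeight Y (columns T) = barWeight Y lam T := by
  rw [chainBarWeight, barWeight]
  simp only [colBarWeight]
  rw [prod_sigma']
  symm
  refine prod_bij (fun c _ => ⟨cellCol c, (T c).1⟩) (fun c hc => ?_) (fun c _ d _ h => ?_)
    (fun b hb => ?_) fun c _ => ?_
  · exact mem_sigma.2 ⟨mem_univ _, (mem_sdiff_unbarredEntries_iff hT c).2 (mem_filter.1 hc).2⟩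
  · simp only [Sigma.mk.injEq, heq_eq_eq] at h
    exact eq_of_fst_eq hT (congrArg Fin.val h.1) h.2
  · obtain ⟨j, a⟩ := b
    have ha := (mem_sigma.1 hb).2
    obtain ⟨c, hc, rfl⟩ := mem_entries.1 (mem_sdiff.1 ha).1
    obtain rfl : cellCol c = j := Fin.ext hc
    exact ⟨c, mem_filter.2 ⟨mem_univ _, (mem_sdiff_unbarredEntries_iff hT c).1 ha⟩, rfl⟩
  · change _ = Y (_ + 1 + _ - (rank (entries T c.1.2) _ : ℤ))
    rw [rank_entries_fst hlam hT]
    rfl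

theorem chainContent_columns (hT : IsBarred lam T) :
    chainContent (columns T) = content1 lam T := by
  funext k
  simp only [chainContent, Finset.sum_apply, colContent, columns, content1]
  rw [← card_filter]
  symm
  refine card_nbij cellCol (fun c hc => ?_) (fun c hc d hd h => ?_) fun j hj => ?_
  · exact mem_filter.2 ⟨mem_univ _, mem_unbarredEntries.2 ⟨c, rfl, (mem_filter.1 hc).2⟩⟩
  · exact eq_of_fst_eq hT (congrArg Fin.val h)
      (by rw [(mem_filter.1 hc).2, (mem_filter.1 hd).2])
  · obtain ⟨c, hc, hck⟩ := mem_unbarredEntries.1 (mem_filter.1 hj).2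
    exact ⟨c, mem_filter.2 ⟨mem_univ _, hck⟩, Fin.ext hc⟩

theorem mem_colLetters {U : Finset (Fin n)} {x : ℕ} : x ∈ colLetters U ↔ ∃ a ∈ U, a.val = x := by
  simp [colLetters]

/-- The letter contributed to the column word by the position in row `i` of column `j`. -/
noncomputable def unbarredLetter (T : cells lam → Fin n × Bool) (j : ℕ) (i : Fin n) : Option ℕ :=
  if h : (i, j) ∈ cells lam then
    (if (T ⟨(i, j), h⟩).2 = false then some ((T ⟨(i, j), h⟩).1 : ℕ) else none)
  else none

theorem unbarredLetter_eq_some_iff {i : Fin n} {j x : ℕ} :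
    unbarredLetter T j i = some x ↔
      ∃ h : (i, j) ∈ cells lam, (T ⟨(i, j), h⟩).2 = false ∧ (T ⟨(i, j), h⟩).1.val = x := by
  unfold unbarredLetter
  split_ifs <;> simp_all

theorem pairwise_lt_filterMap_unbarredLetter (hT : IsBarred lam T) (j : ℕ) :
    ((List.finRange n).filterMap (unbarredLetter T j)).Pairwise (· < ·) := by
  rw [List.pairwise_filterMap]
  refine (List.pairwise_lt_finRange n).imp fun {i i'} hlt x hx x' hx' => ?_
  obtain ⟨h, -, rfl⟩ := unbarredLetter_eq_some_iff.1 hx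
  obtain ⟨h', -, rfl⟩ := unbarredLetter_eq_some_iff.1 hx'
  exact hT.2 ⟨_, h⟩ ⟨_, h'⟩ rfl hlt

theorem colLetters_unbarredEntries (hT : IsBarred lam T) (j : ℕ) :
    colLetters (unbarredEntries T j) = (List.finRange n).filterMap (unbarredLetter T j) := by
  refine (pairwise_lt_colLetters _).sortedLT.eq_of_mem_iff
    (pairwise_lt_filterMap_unbarredLetter hT j).sortedLT fun x => ?_
  simp only [mem_colLetters, mem_unbarredEntries, List.mem_filterMap, List.mem_finRange, true_and,
    unbarredLetter_eq_some_iff]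
  constructor
  · rintro ⟨a, ⟨⟨⟨i, _⟩, h⟩, rfl, hc⟩, rfl⟩
    exact ⟨i, h, by rw [hc], by rw [hc]⟩
  · rintro ⟨i, h, hc, rfl⟩
    exact ⟨_, ⟨⟨(i, j), h⟩, rfl, Prod.ext rfl hc⟩, rfl⟩

theorem chainWord_columns (hT : IsBarred lam T) : chainWord (columns T) = colWord1 lam T := by
  rw [chainWord, colWord1, ← List.map_coe_finRange_eq_range, ← List.map_reverse, List.flatMap_map]
  exact congrArg (List.flatMap · _) (funext fun j => colLetters_unbarredEntries hT j)

theorem wordContent_colWord1 (hT : IsBarred lam T) :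
    wordContent (colWord1 lam T) = content1 lam T := by
  rw [← chainWord_columns hT, wordContent_chainWord, chainContent_columns hT]

end Statistics

/-- The factorial Schur polynomial `s_lam(x|Y)` over an arbitrary ring of `y`-parameters. -/
noncomputable def factorialSchur (Y : ℤ → A) (lam : Fin n → ℕ) : MvPolynomial (Fin n) A :=
  ∑ T with IsSSYT lam T, ∏ c : cells lam, (X (T c) + C (Y (ysub (T c) c.1)))

theorem factorialSchur_zero_zero : factorialSchur (0 : ℤ → A) (0 : Fin n → ℕ) = 1 := by
  have : IsEmpty (cells (0 : Fin n → ℕ)) := ⟨fun c => Nat.not_lt_zero _ (mem_cells.1 c.2)⟩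
  have hS (T : cells (0 : Fin n → ℕ) → Fin n) : IsSSYT 0 T :=
    ⟨fun c => isEmptyElim c, fun c => isEmptyElim c⟩
  simp [factorialSchur, hS]

theorem prod_X_unbarred (lam : Fin n → ℕ) (T : cells lam → Fin n × Bool) :
    ∏ c with ¬(T c).2 = true, (X (T c).1 : MvPolynomial (Fin n) A) = xPow A (content1 lam T) := by
  rw [xPow, ← prod_fiberwise' _ (fun c => (T c).1)]
  refine prod_congr rfl fun k _ => ?_
  rw [prod_const, filter_filter, content1]
  congr 2
  exact filter_congr fun c _ => by simp [Prod.ext_iff, and_comm]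

/-- Expanding every factor `x + y` amounts to choosing which entries are barred. -/
theorem prod_add_eq_sum_bars (Y : ℤ → A) (lam : Fin n → ℕ) (T : cells lam → Fin n) :
    ∏ c : cells lam, (X (T c) + C (Y (ysub (T c) c.1))) =
      ∑ b : cells lam → Bool, C (barWeight Y lam fun c => (T c, b c)) *
        xPow A (content1 lam fun c => (T c, b c)) := by
  have hfactor (c : cells lam) : X (T c) + C (Y (ysub (T c) c.1)) =
      ∑ b : Bool, if b = true then C (Y (ysub (T c) c.1)) else X (T c) := by
    simp [add_comm]
  simp only [hfactor]
  rw [prod_univ_sum, Fintype.piFinset_univ]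
  refine sum_congr rfl fun b _ => ?_
  rw [prod_ite, barWeight, map_prod, ← prod_X_unbarred]

theorem factorialSchur_eq_sum_isBarred (Y : ℤ → A) (lam : Fin n → ℕ) :
    factorialSchur Y lam =
      ∑ T with IsBarred lam T, C (barWeight Y lam T) * xPow A (content1 lam T) := by
  rw [factorialSchur, sum_filter, sum_filter, ← (Equiv.arrowProdEquivProdArrow _ _ _).symm.sum_comp,
    Fintype.sum_prod_type]
  refine sum_congr rfl fun T _ => ?_
  change _ = ∑ b : cells lam → Bool, if IsSSYT lam T then _ else _
  split_ifs
  · exact prod_add_eq_sum_bars Y lam T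
  · rw [sum_const_zero]

section Expansion

variable (Y : ℤ → A) {lam : Fin n → ℕ}

theorem factorialSchur_eq_colSum (hlam : Antitone lam) :
    factorialSchur Y lam = colSum Y (colLength lam) (univ.sup lam) ∅ := by
  have h := sum_isBarred hlam (fun _ => True) fun P =>
    C (chainBarWeight Y P) * xPow A (chainContent P)
  simp only [and_true] at h
  rw [factorialSchur_eq_sum_isBarred, colSum, ← h]
  refine sum_congr rfl fun T hT => ?_
  have hT := (mem_filter.1 hT).2
  rw [chainBarWeight_columns Y hlam hT, chainContent_columns hT]

theorem isSymmetric_factorialSchur (hlam : Antitone lam) : (factorialSchur Y lam).IsSymmetric :=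
  factorialSchur_eq_colSum Y hlam ▸ isSymmetric_colSum_empty Y _ _

theorem antisymmetrize_xPow_rhoPart_mul_factorialSchur_zero (hlam : Antitone lam) :
    antisymmetrize (xPow A (rhoPart n)) * factorialSchur 0 lam =
      antisymmetrize (xPow A (lam + rhoPart n)) := by
  rw [← antisymmetrize_mul_of_isSymmetric _ (isSymmetric_factorialSchur 0 hlam),
    factorialSchur_eq_colSum 0 hlam, antisymmetrize_xPow_mul_colSum_zero hlam]

theorem antisymmetrize_xPow_mul_factorialSchur {ν : Fin n → ℕ} (hν : Antitone ν)
    (hlam : Antitone lam) :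
    antisymmetrize (xPow A (ν + rhoPart n)) * factorialSchur Y lam =
      ∑ T with IsBarred lam T ∧ YamFrom ν (colWord1 lam T),
        C (barWeight Y lam T) * antisymmetrize (xPow A (ν + content1 lam T + rhoPart n)) := by
  rw [← antisymmetrize_mul_of_isSymmetric _ (isSymmetric_factorialSchur Y hlam),
    factorialSchur_eq_colSum Y hlam, antisymmetrize_xPow_mul_colSum Y _ hν,
    ← sum_isBarred hlam (fun P => YamFrom ν (chainWord P)) fun P =>
      C (chainBarWeight Y P) * antisymmetrize (xPow A (ν + chainContent P + rhoPart n))]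
  refine sum_congr (filter_congr fun T _ => and_congr_right fun hT => ?_) fun T hT => ?_
  · rw [chainWord_columns hT]
  · have hT := (mem_filter.1 hT).2.1
    rw [chainBarWeight_columns Y hlam hT, chainContent_columns hT]

theorem factorialSchur_zero_mul_factorialSchur [IsDomain A] {ν : Fin n → ℕ} (hν : Antitone ν)
    (hlam : Antitone lam) :
    factorialSchur 0 ν * factorialSchur Y lam =
      ∑ T with IsBarred lam T ∧ YamFrom ν (colWord1 lam T),
        C (barWeight Y lam T) * factorialSchur 0 (ν + content1 lam T) := by
  refine mul_left_cancel₀ (antisymmetrize_xPow_rhoPart_ne_zero (n := n) (A := A)) ?_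
  rw [← mul_assoc, antisymmetrize_xPow_rhoPart_mul_factorialSchur_zero hν,
    antisymmetrize_xPow_mul_factorialSchur Y hν hlam, mul_sum]
  refine sum_congr rfl fun T hT => ?_
  obtain ⟨hT, hYam⟩ := (mem_filter.1 hT).2
  rw [mul_left_comm,
    antisymmetrize_xPow_rhoPart_mul_factorialSchur_zero (wordContent_colWord1 hT ▸ hYam.antitone)]

end Expansion

/-! ### Sequences of partitions -/

section Sequence

variable {r : ℕ}

theorem colWord_succ (lam : Fin (r + 1) → Fin n → ℕ) (T : ∀ i, cells (lam i) → Fin n × Bool) :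
    colWord lam T =
      colWord1 (lam 0) (T 0) ++ colWord (fun i => lam i.succ) fun i => T i.succ := by
  rw [colWord, List.finRange_succ, List.flatMap_cons, List.flatMap_map, colWord]

theorem contentT_succ (lam : Fin (r + 1) → Fin n → ℕ) (T : ∀ i, cells (lam i) → Fin n × Bool) :
    contentT lam T =
      content1 (lam 0) (T 0) + contentT (fun i => lam i.succ) fun i => T i.succ :=
  funext fun _ => Fin.sum_univ_succ _

theorem isBarredSkew_and_yamFrom_succ (lam : Fin (r + 1) → Fin n → ℕ)
    (T : ∀ i, cells (lam i) → Fin n × Bool) (ν : Fin n → ℕ) :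
    IsBarredSkew lam T ∧ YamFrom ν (colWord lam T) ↔
      (IsBarred (lam 0) (T 0) ∧ YamFrom ν (colWord1 (lam 0) (T 0))) ∧
        IsBarredSkew (fun i => lam i.succ) (fun i => T i.succ) ∧
          YamFrom (ν + content1 (lam 0) (T 0))
            (colWord (fun i => lam i.succ) fun i => T i.succ) := by
  rw [IsBarredSkew, Fin.forall_fin_succ, colWord_succ, yamFrom_append, and_and_and_comm]
  refine and_congr_right fun h => and_congr_right fun _ => ?_
  rw [wordContent_colWord1 h.1]

theorem factorialSchur_zero_mul_prod_factorialSchur [IsDomain A] (Y : Fin r → ℤ → A)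
    {lam : Fin r → Fin n → ℕ} (hlam : ∀ i, Antitone (lam i)) {ν : Fin n → ℕ} (hν : Antitone ν) :
    factorialSchur 0 ν * ∏ i, factorialSchur (Y i) (lam i) =
      ∑ T with IsBarredSkew lam T ∧ YamFrom ν (colWord lam T),
        C (∏ i, barWeight (Y i) (lam i) (T i)) * factorialSchur 0 (ν + contentT lam T) := by
  induction r generalizing ν with
  | zero =>
    rw [sum_filter, Fintype.sum_subsingleton _ fun i => i.elim0,
      if_pos ⟨fun i => i.elim0, yamFrom_nil.2 hν⟩]
    have hcontent (T : ∀ i, cells (lam i) → Fin n × Bool) : contentT lam T = 0 :=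
      funext fun _ => Fin.sum_univ_zero _
    simp [hcontent]
  | succ r ih =>
    rw [Fin.prod_univ_succ, ← mul_assoc, factorialSchur_zero_mul_factorialSchur _ hν (hlam 0),
      sum_mul, sum_filter, sum_filter,
      ← (Fin.consEquiv fun i => cells (lam i) → Fin n × Bool).sum_comp, Fintype.sum_prod_type]
    refine sum_congr rfl fun T _ => ?_
    simp only [isBarredSkew_and_yamFrom_succ, contentT_succ, Fin.prod_univ_succ,
      Fin.consEquiv_apply, Fin.cons_zero, Fin.cons_succ]
    split_ifs with h
    · have hνT : Antitone (ν + content1 (lam 0) T) := wordContent_colWord1 h.1 ▸ h.2.antitone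
      simp only [h, true_and, ← sum_filter]
      rw [mul_assoc, ih (fun i => Y i.succ) (fun i => hlam i.succ) hνT, mul_sum]
      exact sum_congr rfl fun S _ => by rw [C_mul, mul_assoc, add_assoc]
    · simp [h]

theorem isYam_iff_yamFrom_zero {w : List ℕ} (hw : ∀ a ∈ w, a < n) :
    IsYam w ↔ YamFrom (0 : Fin n → ℕ) w := by
  simp only [IsYam, YamFrom, zero_add]
  refine ⟨fun h t => antitone_of_succ_le fun k k' hk => ?_, fun h t k => ?_⟩
  · simpa only [wordContent, hk] using h t k
  · by_cases hk : k + 1 < n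
    · exact h t (Fin.le_def.2 k.le_succ : (⟨k, k.lt_succ_self.trans hk⟩ : Fin n) ≤ ⟨k + 1, hk⟩)
    · rw [List.count_eq_zero_of_not_mem fun hmem => hk (hw _ (List.mem_of_mem_take hmem))]
      exact Nat.zero_le _

theorem lt_of_mem_colWord {lam : Fin r → Fin n → ℕ} {T : ∀ i, cells (lam i) → Fin n × Bool}
    {a : ℕ} (ha : a ∈ colWord lam T) : a < n := by
  obtain ⟨i, -, hai⟩ := List.mem_flatMap.1 ha
  obtain ⟨j, -, haj⟩ := List.mem_flatMap.1 hai
  obtain ⟨k, -, hak⟩ := List.mem_filterMap.1 haj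
  obtain ⟨_, -, rfl⟩ := unbarredLetter_eq_some_iff.1 hak
  exact Fin.is_lt _

end Sequence

section Transfer

variable {r : ℕ}

theorem sumAlgEquiv_schur (lam : Fin n → ℕ) :
    sumAlgEquiv ℤ (Fin n) (Fin r × ℤ) (schur n r lam) = factorialSchur 0 lam := by
  simp [schur, factorialSchur]

theorem sumAlgEquiv_factSchur (i : Fin r) (lam : Fin n → ℕ) :
    sumAlgEquiv ℤ (Fin n) (Fin r × ℤ) (factSchur n r i lam) =
      factorialSchur (fun z => X (i, z)) lam := by
  simp [factSchur, factorialSchur]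

theorem sumAlgEquiv_rename_cT (lam : Fin r → Fin n → ℕ)
    (T : ∀ i, cells (lam i) → Fin n × Bool) :
    sumAlgEquiv ℤ (Fin n) (Fin r × ℤ) (rename Sum.inr (cT lam T)) =
      C (∏ i, barWeight (fun z => X (i, z)) (lam i) (T i)) :=
  DFunLike.congr_fun (sumAlgEquiv_comp_rename_inr ℤ (Fin n) (Fin r × ℤ)) _

end Transfer

end FactorialSchur

/-- Corollary 3.5: `s_λ̄(x|y) = Σ c_T(y) s_{ω(T)}(x)`, summed over
barred skew tableaux of shape `λ̄` with Yamanouchi unbarred column word. -/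
theorem factorial_schur_expansion_yam (n r : ℕ) (hn : 1 ≤ n) (hr : 1 ≤ r)
    (lam : Fin r → Fin n → ℕ) (hlam : ∀ i, IsPartition (lam i)) :
    ∏ i, factSchur n r i (lam i)
      = ∑ T ∈ Finset.univ.filter
          (fun T : (i : Fin r) → cells (lam i) → Fin n × Bool =>
            IsBarredSkew lam T ∧ IsYam (colWord lam T)),
        rename Sum.inr (cT lam T) * schur n r (contentT lam T) := by
  have hYam (T : ∀ i, cells (lam i) → Fin n × Bool) :
      IsYam (colWord lam T) ↔ FactorialSchur.YamFrom (0 : Fin n → ℕ) (colWord lam T) :=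
    FactorialSchur.isYam_iff_yamFrom_zero fun _ => FactorialSchur.lt_of_mem_colWord
  have hmul := FactorialSchur.factorialSchur_zero_mul_prod_factorialSchur
    (fun i z => (X (i, z) : MvPolynomial (Fin r × ℤ) ℤ)) hlam (ν := 0) antitone_const
  rw [FactorialSchur.factorialSchur_zero_zero, one_mul] at hmul
  apply (sumAlgEquiv ℤ (Fin n) (Fin r × ℤ)).injective
  simp only [map_prod, map_sum, map_mul, FactorialSchur.sumAlgEquiv_factSchur, hmul, zero_add,
    FactorialSchur.sumAlgEquiv_rename_cT, FactorialSchur.sumAlgEquiv_schur, hYam]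
end
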